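/- Let S ⊂ ℝ^k be a halfspace, A ∈ (APW^k_S)^{p×m}, B ∈ (APW^k_S)^{p×p} with B invertible in (APW^k)^{p×p}, γ > 0, and assume A and B are left coprime over APW^k_S. Let Λ' be any additive subgroup of ℝ^k containing σ(A) ∪ σ(B). If the operator T(A)_{S,Λ'} (T(A)_{S,Λ'})* − γ^{−2} T(B)_{S,Λ'} (T(B)_{S,Λ'})* on (B^k_{S∩Λ'})^{p×1} is positive definite and invertible, then there exists F ∈ (APW^k_{S∩Λ'})^{m×p} such that sup_{t∈ℝ^k} ‖F(t)‖ ≤ γ and A F = B. -/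

import Mathlib

/- Almost periodic functions of `k` real variables, their Bohr-Fourier
coefficients and spectra, the Wiener algebra, and halfspaces. -/

open MeasureTheory Filter BoundedContinuousFunction

noncomputable section

/-- The Banach algebra of bounded continuous functions `ℝ^k → ℂ` (sup norm). -/
abbrev APB (k : ℕ) := BoundedContinuousFunction (Fin k → ℝ) ℂ

/-- The elementary exponential `e_λ(x) = e^{i⟨λ,x⟩}` as a bounded continuous function. -/
def apExp (k : ℕ) (lam : Fin k → ℝ) : APB k :=
  BoundedContinuousFunction.ofNormedAddCommGroup
    (fun x => Complex.exp (Complex.I * ((∑ j, lam j * x j : ℝ) : ℂ)))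
    (by fun_prop) 1
    (fun x => by
      simp [Complex.norm_exp, Complex.mul_re])

/-- `AP^k`: the closed subalgebra of `L^∞`-type bounded continuous functions
generated by all exponentials `e_λ`, `λ ∈ ℝ^k`. -/
def APalg (k : ℕ) : Subalgebra ℂ (APB k) :=
  (Algebra.adjoin ℂ (Set.range (apExp k))).topologicalClosure

/-- The Bohr-Fourier coefficient
`f_λ = lim_{T→∞} (2T)^{-k} ∫_{[-T,T]^k} e^{-i⟨λ,x⟩} f(x) dx`. -/
def bohrCoeff (k : ℕ) (f : (Fin k → ℝ) → ℂ) (lam : Fin k → ℝ) : ℂ :=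
  limUnder atTop (fun T : ℝ =>
    (((2 * T) ^ k : ℝ) : ℂ)⁻¹ *
      ∫ x in Set.Icc (fun _ => -T : Fin k → ℝ) (fun _ => T),
        Complex.exp (-(Complex.I * ((∑ j, lam j * x j : ℝ) : ℂ))) * f x)

/-- The Bohr-Fourier spectrum `σ(f) = {λ : f_λ ≠ 0}`. -/
def bohrSpectrum (k : ℕ) (f : (Fin k → ℝ) → ℂ) : Set (Fin k → ℝ) :=
  {lam | bohrCoeff k f lam ≠ 0}

/-- Membership in `AP^k_Δ = {f ∈ AP^k : σ(f) ⊆ Δ}`. -/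
def APmem (k : ℕ) (Δ : Set (Fin k → ℝ)) (f : APB k) : Prop :=
  f ∈ APalg k ∧ bohrSpectrum k ⇑f ⊆ Δ

/-- Membership in the Wiener algebra `APW^k_Δ`: almost periodic with spectrum
in `Δ` and absolutely convergent Bohr-Fourier series. -/
def APWmem (k : ℕ) (Δ : Set (Fin k → ℝ)) (f : APB k) : Prop :=
  APmem k Δ f ∧ Summable (fun lam => ‖bohrCoeff k (⇑f) lam‖)

/-- The Wiener norm `‖f‖_W = ∑_λ |f_λ|`. -/
def wienerNorm (k : ℕ) (f : (Fin k → ℝ) → ℂ) : ℝ :=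
  ∑' lam, ‖bohrCoeff k f lam‖

/-- A halfspace `S ⊂ ℝ^k`: `ℝ^k = S ∪ (-S)`, `S ∩ (-S) = {0}`, and `S` is
closed under addition and under multiplication by nonnegative reals. -/
structure IsHalfspace (k : ℕ) (S : Set (Fin k → ℝ)) : Prop where
  union : S ∪ -S = Set.univ
  inter : S ∩ -S = {0}
  add_mem : ∀ x ∈ S, ∀ y ∈ S, x + y ∈ S
  smul_mem : ∀ x ∈ S, ∀ a : ℝ, 0 ≤ a → a • x ∈ S

/- The Besicovitch space and Toeplitz operators.  The Besicovitch space `B^k`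
is the Hilbert-space completion of `AP^k` in the inner product `⟨f,g⟩=M{f·ḡ}`;
the exponentials `e_λ` form an orthonormal basis, so `(B^k_Λ)^{n×1}` is
canonically identified (via Bohr-Fourier coefficients) with `ℓ²(Fin n × Λ)`. -/

/-- The column Besicovitch space `(B^k_Λ)^{n×1} ≅ ℓ²(Fin n × Λ)`. -/
abbrev BesCol (k n : ℕ) (Λ : Set (Fin k → ℝ)) : Type :=
  lp (fun _ : Fin n × ↥Λ => ℂ) 2

/-- `T` is the Toeplitz operator
`T(F)_{S,Λ} : (B^k_{S∩Λ})^{n×1} → (B^k_{S∩Λ})^{m×1}`, `φ ↦ Π_{S∩Λ}(Fφ)`,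
characterized by its matrix with respect to the orthonormal basis of
exponentials: `⟪e_ν δ_i , T(e_μ δ_j)⟫ = (F i j)_{ν-μ}` (Bohr-Fourier
coefficient of the `(i,j)` entry at `ν - μ`). -/
def RepresentsToeplitz (k : ℕ) (S Λ : Set (Fin k → ℝ)) (m n : ℕ)
    (F : Matrix (Fin m) (Fin n) (APB k))
    (T : BesCol k n (S ∩ Λ) →L[ℂ] BesCol k m (S ∩ Λ)) : Prop :=
  ∀ (j : Fin n) (μ : ↥(S ∩ Λ)) (i : Fin m) (ν : ↥(S ∩ Λ)),
    (inner ℂ (lp.single 2 (i, ν) (1 : ℂ)) (T (lp.single 2 (j, μ) (1 : ℂ))) : ℂ) =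
      bohrCoeff k (⇑(F i j)) ((ν : Fin k → ℝ) - (μ : Fin k → ℝ))

/-- Invertibility of a continuous linear map. -/
def CLMInvertible {E F : Type*} [NormedAddCommGroup E] [NormedAddCommGroup F]
    [NormedSpace ℂ E] [NormedSpace ℂ F] (T : E →L[ℂ] F) : Prop :=
  ∃ Tinv : F →L[ℂ] E,
    Tinv.comp T = ContinuousLinearMap.id ℂ E ∧ T.comp Tinv = ContinuousLinearMap.id ℂ F

/-- `sup_{t ∈ ℝ^k} ‖F(t)‖ ≤ γ`, where `‖·‖` is the operator norm of a matrix
with respect to Euclidean vector norms. -/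
def MatrixSupOpNormLE (k m n : ℕ) (F : Matrix (Fin m) (Fin n) (APB k))
    (γ : ℝ) : Prop :=
  ∀ (t : Fin k → ℝ) (v : Fin n → ℂ),
    Real.sqrt (∑ i, ‖∑ j, F i j t * v j‖ ^ 2) ≤
      γ * Real.sqrt (∑ j, ‖v j‖ ^ 2)

/-!
An operator on `ℓ²` whose matrix is dominated by a summable function of the degree has a bounded
inverse of the same kind (Wiener's lemma, by the Bochner–Phillips argument). Hence the columns
`U = T_A* D⁻¹ T_B e` and `V = e + t T_B* D⁻¹ T_B e`, where `D = T_A T_A* - t T_B T_B*` and `e` is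
constant, are again columns of Wiener functions, and `A U = B V`. Multiplication by an analytic
exponential is isometric and its adjoint annihilates `e`, so `|V|² - t |U|²` has no nonconstant
Bohr–Fourier coefficients: it is the constant `⟪V, e⟫ ≥ ‖e‖²`. This bounds `V` below pointwise, so
the Toeplitz operator of `V` is bounded below uniformly in `t ∈ [0, γ⁻²]`; as it is the identity
at `t = 0`, it is invertible for all such `t`. At `t = γ⁻²` the matrix `F = U V⁻¹` solves
`A F = B`, and `γ⁻² |U|² ≤ |V|²` gives `‖F‖ ≤ γ`.
-/

namespace ToeplitzCorona

open scoped Topology InnerProduct ComplexOrder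

section BochnerPhillips

variable {R M Γ J : Type*}

/-- Schur's lemma for simple Banach modules: by Gelfand-Mazur, `f - c` fails to be invertible for
some `c`, and a non-invertible endomorphism of a simple module vanishes. -/
theorem exists_eq_smul_of_isSimpleModule [Ring R] [NormedAddCommGroup M] [NormedSpace ℂ M]
    [CompleteSpace M] [Module R M] [SMulCommClass R ℂ M] [IsSimpleModule R M]
    (f : M →L[R] M) (hf : ∀ (c : ℂ) x, f (c • x) = c • f x) : ∃ c : ℂ, ∀ x, f x = c • x := by
  have : Nontrivial M := IsSimpleModule.nontrivial R M
  let T : M →L[ℂ] M := ⟨⟨⟨f, map_add f⟩, hf⟩, f.continuous⟩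
  obtain ⟨c, hc⟩ := spectrum.nonempty T
  refine ⟨c, fun x => ?_⟩
  let D : M →ₗ[R] M :=
    { toFun := fun y => c • y - f y
      map_add' := fun y y' => by rw [smul_add, map_add, add_sub_add_comm]
      map_smul' := fun a y => by rw [map_smul, RingHom.id_apply, smul_sub, smul_comm a c] }
  rcases D.bijective_or_eq_zero with hD | hD
  · exact absurd (ContinuousLinearMap.isUnit_iff_bijective.2 hD) hc
  · exact (sub_eq_zero.1 (LinearMap.congr_fun hD x)).symm

theorem exists_addChar_smul_eq_of_isSimpleModule [SeminormedRing R] [Algebra ℂ R]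
    [NormedAddCommGroup M] [NormedSpace ℂ M] [CompleteSpace M] [Module R M] [IsBoundedSMul R M]
    [IsScalarTower ℂ R M] [IsSimpleModule R M] [AddCommGroup Γ] (z : AddChar Γ R)
    (hzc : ∀ g a, Commute (z g) a) (hz : ∀ g, ‖z g‖ ≤ 1) :
    ∃ χ : AddChar Γ Circle, ∀ g (x : M), z g • x = (χ g : ℂ) • x := by
  have : SMulCommClass R ℂ M := IsScalarTower.to_smulCommClass' ..
  obtain ⟨e, he⟩ := @exists_ne M (IsSimpleModule.nontrivial R M) 0
  have hscalar : ∀ g, ∃ c : ℂ, ∀ x : M, z g • x = c • x := fun g =>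
    exists_eq_smul_of_isSimpleModule (R := R)
      ⟨⟨⟨(z g • ·), smul_add _⟩, fun a x => by
        simp only [smul_smul, (hzc g a).eq, RingHom.id_apply]⟩, continuous_const_smul (z g)⟩
      fun c x => smul_comm (z g) c x
  choose χ hχ using hscalar
  have hχ0 : χ 0 = 1 := smul_left_injective ℂ he <| by
    simp only [← hχ, AddChar.map_zero_eq_one, one_smul]
  have hχadd : ∀ g h, χ (g + h) = χ g * χ h := fun g h => smul_left_injective ℂ he <| by
    simp only [← hχ, AddChar.map_add_eq_mul, mul_smul]
  have hχle : ∀ g, ‖χ g‖ ≤ 1 := fun g => by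
    refine le_of_mul_le_mul_right ?_ (norm_pos_iff.2 he)
    rw [← norm_smul, ← hχ]
    exact (norm_smul_le _ _).trans (mul_le_mul_of_nonneg_right (hz g) (norm_nonneg e))
  have hχ1 : ∀ g, ‖χ g‖ = 1 := fun g => by
    have hinv : ‖χ g‖ * ‖χ (-g)‖ = 1 := by
      rw [← norm_mul, ← hχadd, add_neg_cancel, hχ0, norm_one]
    nlinarith [hχle g, hχle (-g), norm_nonneg (χ g), norm_nonneg (χ (-g))]
  exact ⟨⟨fun g => ⟨χ g, mem_sphere_zero_iff_norm.2 (hχ1 g)⟩, Subtype.ext hχ0,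
    fun g h => Subtype.ext (hχadd g h)⟩, hχ⟩

theorem isBoundedSMul_quotient [SeminormedRing R] [SeminormedAddCommGroup M] [Module R M]
    [IsBoundedSMul R M] (N : Submodule R M) : IsBoundedSMul R (M ⧸ N) :=
  .of_norm_smul_le fun r x => by
    have hcont : Continuous fun δ : ℝ => ‖r‖ * (‖x‖ + δ) := by fun_prop
    refine ge_of_tendsto (x := 𝓝[>] (0 : ℝ))
      ((hcont.tendsto' 0 _ (by rw [add_zero])).mono_left nhdsWithin_le_nhds) ?_
    filter_upwards [self_mem_nhdsWithin] with δ (hδ : 0 < δ)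
    obtain ⟨m, rfl, hm⟩ := Submodule.Quotient.norm_mk_lt x hδ
    calc ‖r • Submodule.Quotient.mk m‖ ≤ ‖r • m‖ := Submodule.Quotient.norm_mk_le N _
      _ ≤ ‖r‖ * ‖m‖ := norm_smul_le r m
      _ ≤ ‖r‖ * (‖Submodule.Quotient.mk m‖ + δ) := by gcongr

/-- The Bochner-Phillips theorem. -/
theorem exists_mul_tsum_eq_one_of_addChar [NormedRing R] [NormedAlgebra ℂ R] [CompleteSpace R]
    [AddCommGroup Γ] (z : AddChar Γ R) (hzc : ∀ g a, Commute (z g) a) (hz : ∀ g, ‖z g‖ ≤ 1)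
    {b : J → R} (d : J → Γ) (hb : Summable fun j => ‖b j‖)
    (h : ∀ χ : AddChar Γ Circle, ∃ a, a * ∑' j, (χ (d j) : ℂ) • b j = 1) :
    ∃ a, a * ∑' j, b j * z (d j) = 1 := by
  by_contra! hcon
  have hspan : Ideal.span {∑' j, b j * z (d j)} ≠ (⊤ : Ideal R) := by
    rw [Ideal.ne_top_iff_one, Ideal.mem_span_singleton']
    exact not_exists.2 hcon
  obtain ⟨L, hL, hle⟩ := Ideal.exists_le_maximal _ hspan
  have : IsSimpleModule R (R ⧸ L) := isSimpleModule_iff_isCoatom.2 hL.out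
  have : IsClosed (L : Set R) := Ideal.IsMaximal.isClosed (I := L)
  have : IsBoundedSMul R (R ⧸ L) := isBoundedSMul_quotient L
  obtain ⟨χ, hχ⟩ := exists_addChar_smul_eq_of_isSimpleModule (M := R ⧸ L) z hzc hz
  obtain ⟨a, ha⟩ := h χ
  have hbz : Summable fun j => b j * z (d j) :=
    hb.of_norm_bounded fun j => (norm_mul_le _ _).trans
      (mul_le_of_le_one_right (norm_nonneg _) (hz _))
  have hχb : Summable fun j => (χ (d j) : ℂ) • b j :=
    hb.of_norm_bounded fun j => by rw [norm_smul, Circle.norm_coe, one_mul]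
  have hmk : ∀ j, L.mkQ (b j * z (d j)) = L.mkQ ((χ (d j) : ℂ) • b j) := fun j => by
    have hj := congrArg (b j • ·) (hχ (d j) (L.mkQ 1))
    simpa only [← map_smul, smul_eq_mul, mul_one, smul_comm (b j), L.mkQ.map_smul_of_tower]
      using hj
  have hmem : ∑' j, (χ (d j) : ℂ) • b j ∈ L := by
    have hc : Continuous L.mkQ := continuous_quot_mk
    have hmap := (hχb.hasSum.map L.mkQ hc).unique
      (by simpa only [Function.comp_def, hmk] using hbz.hasSum.map L.mkQ hc)
    have hker : ∀ x, L.mkQ x = 0 ↔ x ∈ L := fun x => Submodule.Quotient.mk_eq_zero L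
    rw [← hker, hmap, hker]
    exact hle (Ideal.mem_span_singleton_self _)
  exact (Ideal.ne_top_iff_one L).1 hL.ne_top (ha ▸ L.mul_mem_left a hmem)

end BochnerPhillips

section BoundedFamilies

variable {ι 𝕜 E F : Type*} [NontriviallyNormedField 𝕜] [SeminormedAddCommGroup E]
  [NormedSpace 𝕜 E] [SeminormedAddCommGroup F] [NormedSpace 𝕜 F] {T : ι → E →L[𝕜] F} {C : ℝ}

theorem isClosed_setOf_tendsto_of_norm_le (hT : ∀ i, ‖T i‖ ≤ C) (l : Filter ι) (L : E →L[𝕜] F) :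
    IsClosed {x | Tendsto (T · x) l (𝓝 (L x))} :=
  Equicontinuous.isClosed_setOfPred_tendsto
    (LipschitzWith.uniformEquicontinuous (fun i x => T i x) C.toNNReal fun i =>
      (T i).lipschitz.weaken (NNReal.le_toNNReal_of_coe_le (hT i))).equicontinuous L.continuous

theorem isClosed_setOf_exists_tendsto_of_norm_le [CompleteSpace F] (hT : ∀ i, ‖T i‖ ≤ C)
    (l : Filter ι) [l.NeBot] : IsClosed {x | ∃ y, Tendsto (T · x) l (𝓝 y)} := by
  have hdiff : ∀ q : ι × ι, ‖T q.2 - T q.1‖ ≤ C + C := fun q =>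
    (norm_sub_le _ _).trans (add_le_add (hT _) (hT _))
  convert isClosed_setOf_tendsto_of_norm_le hdiff (l ×ˢ l) 0 using 3 with x
  rw [← cauchy_map_iff_exists_tendsto, cauchy_map_iff', uniformity_eq_comap_nhds_zero,
    tendsto_comap_iff]
  rfl

theorem isClosed_setOf_totallyBounded_range_of_norm_le (hT : ∀ i, ‖T i‖ ≤ C) :
    IsClosed {x | TotallyBounded (Set.range (T · x))} := by
  refine isClosed_of_closure_subset fun x hx => Metric.totallyBounded_iff.2 fun ε hε => ?_
  have hcont : Continuous fun y => C * dist x y := by fun_prop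
  obtain ⟨y, hxy, hy⟩ := mem_closure_iff_nhds.1 hx _
    ((hcont.tendsto' x 0 (by rw [dist_self, mul_zero])).eventually_lt_const (half_pos hε))
  obtain ⟨t, ht, hcover⟩ := Metric.totallyBounded_iff.1 hy (ε / 2) (half_pos hε)
  refine ⟨t, ht, Set.range_subset_iff.2 fun i => ?_⟩
  obtain ⟨z, hz, hiz⟩ := Set.mem_iUnion₂.1 (Set.range_subset_iff.1 hcover i)
  refine Set.mem_biUnion hz (Metric.mem_ball.2 ?_)
  calc dist (T i x) z ≤ dist (T i x) (T i y) + dist (T i y) z := dist_triangle _ _ _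
    _ < ε / 2 + ε / 2 := by
      refine add_lt_add (lt_of_le_of_lt ?_ hxy) hiz
      rw [dist_eq_norm, ← map_sub, dist_eq_norm]
      exact (T i).le_of_opNorm_le (hT i) _
    _ = ε := add_halves ε

end BoundedFamilies

section BohrMean

variable {k : ℕ}

theorem apExp_apply (lam x : Fin k → ℝ) :
    apExp k lam x = Complex.exp (Complex.I * ((∑ j, lam j * x j : ℝ) : ℂ)) := rfl

theorem apExp_zero : apExp k 0 = 1 := by
  ext x
  simp [apExp_apply]

theorem apExp_add (a b : Fin k → ℝ) : apExp k (a + b) = apExp k a * apExp k b := by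
  ext x
  simp only [BoundedContinuousFunction.mul_apply, apExp_apply, ← Complex.exp_add, ← mul_add,
    Pi.add_apply, add_mul, Finset.sum_add_distrib, Complex.ofReal_add]

theorem star_apExp (a : Fin k → ℝ) : star (apExp k a) = apExp k (-a) := by
  ext x
  rw [BoundedContinuousFunction.star_apply, apExp_apply, apExp_apply]
  simp [← Complex.exp_conj]

theorem norm_apExp_le (a : Fin k → ℝ) : ‖apExp k a‖ ≤ 1 :=
  BoundedContinuousFunction.norm_ofNormedAddCommGroup_le _ zero_le_one _

theorem apExp_add_arg (lam x a : Fin k → ℝ) :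
    apExp k lam (x + a) = apExp k lam a * apExp k lam x := by
  simp only [apExp_apply, ← Complex.exp_add, ← mul_add, ← Complex.ofReal_add,
    ← Finset.sum_add_distrib, Pi.add_apply, add_comm]

theorem span_apExp_eq_adjoin :
    Submodule.span ℂ (Set.range (apExp k)) =
      Subalgebra.toSubmodule (Algebra.adjoin ℂ (Set.range (apExp k))) := by
  rw [Algebra.adjoin_eq_span]
  congr 1
  let M : Submonoid (APB k) :=
    { carrier := Set.range (apExp k)
      one_mem' := ⟨0, apExp_zero⟩
      mul_mem' := by
        rintro _ _ ⟨a, rfl⟩ ⟨b, rfl⟩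
        exact ⟨a + b, apExp_add a b⟩ }
  exact congrArg SetLike.coe (Submonoid.closure_eq M).symm

theorem apExp_mem (lam : Fin k → ℝ) : apExp k lam ∈ APalg k :=
  subset_closure (Algebra.subset_adjoin ⟨lam, rfl⟩)

theorem isClosed_APalg : IsClosed (APalg k : Set (APB k)) :=
  Subalgebra.isClosed_topologicalClosure _

theorem APalg_induction {P : APB k → Prop} (hclosed : IsClosed {f | P f})
    (hexp : ∀ lam, P (apExp k lam)) (hadd : ∀ f g, P f → P g → P (f + g))
    (hsmul : ∀ (c : ℂ) f, P f → P (c • f)) {f : APB k} (hf : f ∈ APalg k) : P f := by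
  refine closure_minimal (fun g hg => ?_) hclosed hf
  replace hg : g ∈ Submodule.span ℂ (Set.range (apExp k)) := span_apExp_eq_adjoin ▸ hg
  induction hg using Submodule.span_induction with
  | mem g hg => obtain ⟨lam, rfl⟩ := hg; exact hexp lam
  | zero => simpa using hsmul 0 _ (hexp 0)
  | add g h _ _ hg hh => exact hadd g h hg hh
  | smul c g _ hg => exact hsmul c g hg

theorem star_mem_APalg {f : APB k} (hf : f ∈ APalg k) : star f ∈ APalg k :=
  APalg_induction (P := fun f => star f ∈ APalg k) (isClosed_APalg.preimage continuous_star)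
    (fun lam => star_apExp lam ▸ apExp_mem _) (fun f g hf hg => star_add f g ▸ add_mem hf hg)
    (fun c f hf => star_smul c f ▸ (APalg k).smul_mem hf _) hf

theorem integrableOn_box (T : ℝ) (f : APB k) :
    IntegrableOn (fun x => f x) (Set.Icc (fun _ => -T : Fin k → ℝ) (fun _ => T)) :=
  f.continuous.continuousOn.integrableOn_compact isCompact_Icc

theorem volume_real_box (T : ℝ) :
    volume.real (Set.Icc (fun _ => -T : Fin k → ℝ) (fun _ => T)) = max (2 * T) 0 ^ k := by
  simp [measureReal_def, Real.volume_Icc_pi, ENNReal.toReal_ofReal', two_mul]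

/-- The average of `f` over the box `[-T,T]^k`. -/
def boxAvg (T : ℝ) : APB k →L[ℂ] ℂ :=
  LinearMap.mkContinuous
    { toFun := fun f =>
        (((2 * T) ^ k : ℝ) : ℂ)⁻¹ * ∫ x in Set.Icc (fun _ => -T : Fin k → ℝ) (fun _ => T), f x
      map_add' := fun f g => by
        rw [← mul_add, ← integral_add (integrableOn_box T f) (integrableOn_box T g)]
        rfl
      map_smul' := fun c f => by
        rw [RingHom.id_apply, smul_eq_mul, mul_left_comm, ← integral_const_mul c]
        rfl } 1
    fun f => by
      rw [LinearMap.coe_mk, AddHom.coe_mk, norm_mul, norm_inv, Complex.norm_real, Real.norm_eq_abs]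
      refine inv_mul_le_of_le_mul₀ (abs_nonneg _) (by positivity) ?_
      rw [one_mul, mul_comm]
      exact (norm_setIntegral_le_of_norm_le_const isCompact_Icc.measure_lt_top
        fun x _ => f.norm_coe_le_norm x).trans (by
          rw [volume_real_box, abs_pow]
          gcongr
          exact max_le (le_abs_self _) (abs_nonneg _))

theorem boxAvg_apply (T : ℝ) (f : APB k) : boxAvg T f =
    (((2 * T) ^ k : ℝ) : ℂ)⁻¹ * ∫ x in Set.Icc (fun _ => -T : Fin k → ℝ) (fun _ => T), f x := rfl

theorem norm_boxAvg_le (T : ℝ) : ‖boxAvg (k := k) T‖ ≤ 1 :=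
  LinearMap.mkContinuous_norm_le _ zero_le_one _

theorem le_re_boxAvg {T : ℝ} (hT : 0 < T) (f : APB k) {c : ℝ} (hc : ∀ x, c ≤ (f x).re) :
    c ≤ (boxAvg T f).re := by
  rw [boxAvg_apply, ← Complex.ofReal_inv, Complex.re_ofReal_mul,
    le_inv_mul_iff₀ (by positivity), ← max_eq_left (mul_pos two_pos hT).le, ← volume_real_box,
    ← RCLike.re_eq_complex_re, ← integral_re (integrableOn_box T f), ← smul_eq_mul,
    ← setIntegral_const]
  exact setIntegral_mono (integrableOn_const isCompact_Icc.measure_lt_top.ne)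
    (integrableOn_box T f).re hc

theorem integral_Icc_exp_mul_I {T : ℝ} (hT : 0 < T) (l : ℝ) :
    ∫ x in Set.Icc (-T) T, Complex.exp (Complex.I * ((l * x : ℝ) : ℂ)) =
      2 * T * Real.sinc (l * T) := by
  rcases eq_or_ne l 0 with rfl | hl
  · simp [Real.volume_real_Icc_of_le (neg_le_self hT.le), two_mul]
  · rw [integral_Icc_eq_integral_Ioc, ← intervalIntegral.integral_of_le (neg_le_self hT.le)]
    have h := intervalIntegral.integral_comp_mul_left (a := -T) (b := T)
      (fun t : ℝ => Complex.exp (Complex.I * t)) hl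
    rw [h, mul_neg]
    simp only [mul_comm Complex.I, integral_exp_mul_I_eq_sinc, Complex.real_smul]
    push_cast
    field_simp

theorem boxAvg_apExp {T : ℝ} (hT : 0 < T) (lam : Fin k → ℝ) :
    boxAvg T (apExp k lam) = ∏ j, (Real.sinc (lam j * T) : ℂ) := by
  have hint : ∫ x in Set.Icc (fun _ => -T : Fin k → ℝ) (fun _ => T), apExp k lam x =
      ∏ j, ∫ x in Set.Icc (-T) T, Complex.exp (Complex.I * ((lam j * x : ℝ) : ℂ)) := by
    rw [← Set.pi_univ_Icc, volume_pi, Measure.restrict_pi_pi,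
      ← integral_fintype_prod_eq_prod (𝕜 := ℂ)]
    simp only [apExp_apply, ← Complex.exp_sum, ← Finset.mul_sum, Complex.ofReal_sum]
  have hT' : (T : ℂ) ≠ 0 := Complex.ofReal_ne_zero.2 hT.ne'
  rw [boxAvg_apply, hint]
  simp only [integral_Icc_exp_mul_I hT, Finset.prod_mul_distrib, Finset.prod_const,
    Finset.card_univ, Fintype.card_fin, ← mul_pow]
  push_cast
  exact inv_mul_cancel_left₀ (pow_ne_zero k (mul_ne_zero two_ne_zero hT')) _

theorem tendsto_sinc_mul_atTop (l : ℝ) :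
    Tendsto (fun T => (Real.sinc (l * T) : ℂ)) atTop (𝓝 (if l = 0 then 1 else 0)) := by
  split_ifs with hl
  · simp [hl]
  · refine squeeze_zero_norm' (a := fun T : ℝ => |l|⁻¹ * T⁻¹) ?_
      (by simpa using (tendsto_inv_atTop_zero (𝕜 := ℝ)).const_mul |l|⁻¹)
    filter_upwards [eventually_gt_atTop 0] with T hT
    rw [Complex.norm_real, Real.norm_eq_abs, Real.sinc_of_ne_zero (mul_ne_zero hl hT.ne'), abs_div,
      abs_mul, abs_of_pos hT, div_eq_mul_inv, mul_inv]
    exact mul_le_of_le_one_left (by positivity) (Real.abs_sin_le_one _)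

theorem tendsto_boxAvg_apExp (lam : Fin k → ℝ) :
    Tendsto (fun T : ℝ => boxAvg T (apExp k lam)) atTop (𝓝 (if lam = 0 then 1 else 0)) := by
  have h : Tendsto (fun T => ∏ j, (Real.sinc (lam j * T) : ℂ)) atTop
      (𝓝 (if lam = 0 then 1 else 0)) := by
    convert tendsto_finsetProd Finset.univ fun j _ => tendsto_sinc_mul_atTop (lam j) using 2
    simp [Finset.prod_ite_zero, funext_iff]
  refine h.congr' ?_
  filter_upwards [eventually_gt_atTop 0] with T hT using (boxAvg_apExp hT lam).symm

theorem exists_tendsto_boxAvg {f : APB k} (hf : f ∈ APalg k) :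
    ∃ c, Tendsto (fun T : ℝ => boxAvg T f) atTop (𝓝 c) := by
  refine APalg_induction (isClosed_setOf_exists_tendsto_of_norm_le norm_boxAvg_le atTop)
    (fun lam => ⟨_, tendsto_boxAvg_apExp lam⟩) ?_ ?_ hf
  · rintro f g ⟨c, hc⟩ ⟨d, hd⟩
    exact ⟨c + d, by simpa only [map_add] using hc.add hd⟩
  · rintro a f ⟨c, hc⟩
    exact ⟨a • c, by simpa only [map_smul] using hc.const_smul a⟩

end BohrMean

section BohrCoefficients

variable {k : ℕ} {f g : APB k}

theorem bohrCoeff_eq_limUnder (f : APB k) (lam : Fin k → ℝ) :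
    bohrCoeff k f lam = limUnder atTop fun T : ℝ => boxAvg T (apExp k (-lam) * f) := by
  simp [bohrCoeff, boxAvg_apply, apExp_apply]

theorem tendsto_boxAvg_bohrCoeff (hf : f ∈ APalg k) (lam : Fin k → ℝ) :
    Tendsto (fun T : ℝ => boxAvg T (apExp k (-lam) * f)) atTop (𝓝 (bohrCoeff k f lam)) := by
  rw [bohrCoeff_eq_limUnder]
  exact tendsto_nhds_limUnder (exists_tendsto_boxAvg (mul_mem (apExp_mem _) hf))

theorem bohrCoeff_eq_of_tendsto {lam : Fin k → ℝ} {c : ℂ}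
    (h : Tendsto (fun T : ℝ => boxAvg T (apExp k (-lam) * f)) atTop (𝓝 c)) :
    bohrCoeff k f lam = c := by
  rw [bohrCoeff_eq_limUnder]
  exact h.limUnder_eq

theorem bohrCoeff_add (hf : f ∈ APalg k) (hg : g ∈ APalg k) (lam : Fin k → ℝ) :
    bohrCoeff k ⇑(f + g) lam = bohrCoeff k f lam + bohrCoeff k g lam := by
  apply bohrCoeff_eq_of_tendsto
  simpa only [mul_add, map_add] using
    (tendsto_boxAvg_bohrCoeff hf lam).add (tendsto_boxAvg_bohrCoeff hg lam)

theorem bohrCoeff_smul (hf : f ∈ APalg k) (c : ℂ) (lam : Fin k → ℝ) :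
    bohrCoeff k ⇑(c • f) lam = c * bohrCoeff k f lam := by
  apply bohrCoeff_eq_of_tendsto
  simpa only [mul_smul_comm, map_smul, smul_eq_mul] using
    (tendsto_boxAvg_bohrCoeff hf lam).const_mul c

theorem norm_bohrCoeff_le (hf : f ∈ APalg k) (lam : Fin k → ℝ) : ‖bohrCoeff k f lam‖ ≤ ‖f‖ := by
  refine le_of_tendsto' (tendsto_boxAvg_bohrCoeff hf lam).norm fun T => ?_
  calc ‖boxAvg T (apExp k (-lam) * f)‖ ≤ 1 * ‖apExp k (-lam) * f‖ :=
        (boxAvg T).le_of_opNorm_le (norm_boxAvg_le T) _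
    _ ≤ ‖f‖ := by
      rw [one_mul]
      exact (norm_mul_le _ _).trans (mul_le_of_le_one_left (norm_nonneg _) (norm_apExp_le _))

theorem bohrCoeff_apExp_mul (f : APB k) (mu lam : Fin k → ℝ) :
    bohrCoeff k ⇑(apExp k mu * f) lam = bohrCoeff k f (lam - mu) := by
  simp only [bohrCoeff_eq_limUnder, ← mul_assoc, ← apExp_add, neg_sub, neg_add_eq_sub]

theorem bohrCoeff_apExp (mu lam : Fin k → ℝ) :
    bohrCoeff k ⇑(apExp k mu) lam = if mu = lam then 1 else 0 := by
  apply bohrCoeff_eq_of_tendsto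
  rw [← apExp_add]
  convert tendsto_boxAvg_apExp (-lam + mu) using 3
  rw [neg_add_eq_zero, eq_comm]

/-- The Bohr-Fourier coefficient at `lam` as a continuous linear functional on `AP^k`. -/
def bohrCoeffCLM (lam : Fin k → ℝ) : ↥(APalg k) →L[ℂ] ℂ :=
  LinearMap.mkContinuous
    { toFun := fun f => bohrCoeff k ⇑(f : APB k) lam
      map_add' := fun f g => bohrCoeff_add f.2 g.2 lam
      map_smul' := fun c f => bohrCoeff_smul f.2 c lam } 1
    fun f => (one_mul ‖f‖).symm ▸ norm_bohrCoeff_le f.2 lam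

theorem mem_APalg_of_hasSum {J : Type*} {f : J → APB k} {F : APB k} (h : HasSum f F)
    (hf : ∀ j, f j ∈ APalg k) : F ∈ APalg k :=
  isClosed_APalg.mem_of_tendsto h (Eventually.of_forall fun _ => sum_mem fun j _ => hf j)

theorem hasSum_bohrCoeff {J : Type*} {f : J → APB k} {F : APB k} (h : HasSum f F)
    (hf : ∀ j, f j ∈ APalg k) (lam : Fin k → ℝ) :
    HasSum (fun j => bohrCoeff k (f j) lam) (bohrCoeff k F lam) := by
  have hsub : HasSum (fun j => (⟨f j, hf j⟩ : APalg k)) ⟨F, mem_APalg_of_hasSum h hf⟩ := by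
    rw [HasSum, Topology.IsInducing.subtypeVal.tendsto_nhds_iff]
    exact h.congr fun s => by simp
  exact hsub.mapL (bohrCoeffCLM lam)

end BohrCoefficients

section Uniqueness

variable {k : ℕ} {f g : APB k}

/-- The translation `f ↦ f (· + a)`. -/
def translate (a : Fin k → ℝ) : APB k →L[ℂ] APB k :=
  LinearMap.mkContinuous
    { toFun := fun f => f.compContinuous ⟨fun x => x + a, by fun_prop⟩
      map_add' := fun _ _ => rfl
      map_smul' := fun _ _ => rfl } 1
    fun f => by
      rw [one_mul]
      exact (BoundedContinuousFunction.norm_le (norm_nonneg f)).2 fun _ => f.norm_coe_le_norm _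

theorem translate_apply (a x : Fin k → ℝ) (f : APB k) : translate a f x = f (x + a) := rfl

theorem norm_translate_le (a : Fin k → ℝ) : ‖translate a‖ ≤ 1 :=
  LinearMap.mkContinuous_norm_le _ zero_le_one _

theorem translate_apExp (a lam : Fin k → ℝ) :
    translate a (apExp k lam) = apExp k lam a • apExp k lam :=
  BoundedContinuousFunction.ext fun x => apExp_add_arg lam x a

theorem tendsto_boxAvg_translate (hf : f ∈ APalg k) (a : Fin k → ℝ)
    (h : Tendsto (fun T : ℝ => boxAvg T f) atTop (𝓝 0)) :
    Tendsto (fun T : ℝ => boxAvg T (translate a f)) atTop (𝓝 0) := by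
  have hdiff : ∀ T : ℝ, ‖(boxAvg T).comp (translate a) - boxAvg T‖ ≤ 1 * 1 + 1 := fun T =>
    (norm_sub_le _ _).trans (add_le_add ((boxAvg T).opNorm_comp_le _ |>.trans
      (mul_le_mul (norm_boxAvg_le T) (norm_translate_le a) (norm_nonneg _) zero_le_one))
      (norm_boxAvg_le T))
  have hlim : Tendsto (fun T : ℝ => boxAvg T (translate a f) - boxAvg T f) atTop (𝓝 0) := by
    refine APalg_induction (isClosed_setOf_tendsto_of_norm_le hdiff atTop 0) (fun lam => ?_)
      (fun f g hf hg => ?_) (fun c f hf => ?_) hf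
    · have hexp := tendsto_boxAvg_apExp lam
      have hlim := (hexp.const_mul (apExp k lam a)).sub hexp
      have hzero : apExp k lam a * (if lam = 0 then 1 else 0) - (if lam = 0 then 1 else 0) = 0 := by
        rcases eq_or_ne lam 0 with rfl | hlam
        · simp [apExp_zero]
        · simp [hlam]
      rw [hzero] at hlim
      simpa [translate_apExp] using hlim
    · simpa [add_sub_add_comm] using hf.add hg
    · simpa using hf.const_smul c
  simpa using hlim.add h

/-- The easy direction of Bochner's characterisation of almost periodicity. -/
theorem totallyBounded_range_translate (hf : f ∈ APalg k) :
    TotallyBounded (Set.range (translate · f)) := by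
  refine APalg_induction (isClosed_setOf_totallyBounded_range_of_norm_le norm_translate_le)
    (fun lam => ?_) (fun f g hf hg => ?_) (fun c f hf => ?_) hf
  · refine ((isCompact_closedBall (0 : ℂ) 1).image (f := (· • apExp k lam))
      (by fun_prop)).totallyBounded.subset (Set.range_subset_iff.2 fun a => ?_)
    exact ⟨apExp k lam a, mem_closedBall_zero_iff.2
      (((apExp k lam).norm_coe_le_norm a).trans (norm_apExp_le lam)), (translate_apExp a lam).symm⟩
  · have hcompact : ∀ {K : Set (APB k)}, TotallyBounded K → IsCompact (closure K) := fun hK =>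
      hK.closure.isCompact_of_isClosed isClosed_closure
    refine ((hcompact hf).add (hcompact hg)).totallyBounded.subset
      (Set.range_subset_iff.2 fun a => ?_)
    rw [map_add]
    exact Set.add_mem_add (subset_closure ⟨a, rfl⟩) (subset_closure ⟨a, rfl⟩)
  · refine (TotallyBounded.image hf (uniformContinuous_const_smul c)).subset
      (Set.range_subset_iff.2 fun a => ?_)
    exact ⟨translate a f, ⟨a, rfl⟩, (map_smul _ c f).symm⟩

theorem tendsto_boxAvg_mul (hf : f ∈ APalg k) (h : ∀ lam, bohrCoeff k f lam = 0)
    (hg : g ∈ APalg k) : Tendsto (fun T : ℝ => boxAvg T (g * f)) atTop (𝓝 0) := by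
  have hbound : ∀ T : ℝ, ‖(boxAvg T).comp (ContinuousLinearMap.mul ℂ (APB k) f)‖ ≤
      1 * ‖ContinuousLinearMap.mul ℂ (APB k) f‖ := fun T =>
    ((boxAvg T).opNorm_comp_le _).trans (by gcongr; exact norm_boxAvg_le T)
  simp only [mul_comm g]
  refine APalg_induction (isClosed_setOf_tendsto_of_norm_le hbound atTop 0) (fun lam => ?_)
    (fun g g' hg hg' => ?_) (fun c g hg => ?_) hg
  · simpa [h, mul_comm f] using tendsto_boxAvg_bohrCoeff hf (-lam)
  · simpa [mul_add] using hg.add hg'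
  · simpa using hg.const_smul c

/-- If `f x₀ ≠ 0`, then finitely many translates of `‖f‖²` sum up to a function bounded away from
`0`, although each of them has mean `0`. -/
theorem eq_zero_of_bohrCoeff (hf : f ∈ APalg k) (h : ∀ lam, bohrCoeff k f lam = 0) : f = 0 := by
  ext x₀
  by_contra hx₀
  have hpos : 0 < ‖f x₀‖ / 2 := half_pos (norm_pos_iff.2 hx₀)
  obtain ⟨t, htrans, ht, hcover⟩ :=
    Metric.finite_approx_of_totallyBounded (totallyBounded_range_translate hf) _ hpos
  lift t to Finset (APB k) using ht
  have hsq : ∀ (g : APB k) x, ((star g * g) x).re = ‖g x‖ ^ 2 := fun g x => by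
    rw [BoundedContinuousFunction.mul_apply, BoundedContinuousFunction.star_apply,
      Complex.star_def, Complex.conj_mul', ← Complex.ofReal_pow, Complex.ofReal_re]
  have hmean : Tendsto (fun T : ℝ => boxAvg T (∑ g ∈ t, star g * g)) atTop (𝓝 0) := by
    simp only [map_sum]
    rw [← t.sum_const_zero]
    refine tendsto_finsetSum t fun g hg => ?_
    obtain ⟨a, rfl⟩ := htrans hg
    exact tendsto_boxAvg_translate (mul_mem (star_mem_APalg hf) hf) a
      (tendsto_boxAvg_mul hf h (star_mem_APalg hf))
  have hlower : ∀ x, (‖f x₀‖ / 2) ^ 2 ≤ ((∑ g ∈ t, star g * g) x).re := fun x => by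
    obtain ⟨g, hg, hclose⟩ := Set.mem_iUnion₂.1 (hcover ⟨x₀ - x, rfl⟩)
    have hgx : ‖f x₀‖ / 2 ≤ ‖g x‖ := by
      have hdist := ((translate (x₀ - x) f - g).norm_coe_le_norm x).trans_lt
        (mem_ball_iff_norm.1 hclose)
      rw [BoundedContinuousFunction.sub_apply, translate_apply, add_sub_cancel] at hdist
      linarith [norm_sub_norm_le (f x₀) (g x)]
    rw [BoundedContinuousFunction.coe_sum, Finset.sum_apply, Complex.re_sum]
    calc (‖f x₀‖ / 2) ^ 2 ≤ ‖g x‖ ^ 2 := by gcongr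
      _ = ((star g * g) x).re := (hsq g x).symm
      _ ≤ _ := Finset.single_le_sum (f := fun g => ((star g * g) x).re)
        (fun g _ => by rw [hsq]; positivity) hg
  have hle : (‖f x₀‖ / 2) ^ 2 ≤ (0 : ℂ).re :=
    ge_of_tendsto ((Complex.continuous_re.tendsto 0).comp hmean) <|
      (eventually_gt_atTop 0).mono fun T hT => le_re_boxAvg hT _ hlower
  exact (pow_pos hpos 2).not_ge hle

theorem eq_of_bohrCoeff (hf : f ∈ APalg k) (hg : g ∈ APalg k)
    (h : ∀ lam, bohrCoeff k f lam = bohrCoeff k g lam) : f = g := by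
  refine sub_eq_zero.1 (eq_zero_of_bohrCoeff (sub_mem hf hg) fun lam => ?_)
  exact ((bohrCoeffCLM lam).map_sub ⟨f, hf⟩ ⟨g, hg⟩).trans (sub_eq_zero.2 (h lam))

end Uniqueness

section WienerAlgebra

variable {k : ℕ} {Δ : Set (Fin k → ℝ)} {c : (Fin k → ℝ) → ℂ} {f g : APB k}

theorem bohrCoeff_zero (lam : Fin k → ℝ) : bohrCoeff k (0 : APB k) lam = 0 :=
  (bohrCoeffCLM lam).map_zero

theorem bohrCoeff_sum {ι : Type*} (s : Finset ι) {f : ι → APB k} (hf : ∀ i, f i ∈ APalg k)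
    (lam : Fin k → ℝ) : bohrCoeff k ⇑(∑ i ∈ s, f i) lam = ∑ i ∈ s, bohrCoeff k (f i) lam := by
  have hcoe : ∑ i ∈ s, f i = ((∑ i ∈ s, ⟨f i, hf i⟩ : APalg k) : APB k) :=
    (AddSubmonoidClass.coe_finsetSum (fun i => (⟨f i, hf i⟩ : APalg k)) s).symm
  rw [hcoe]
  exact map_sum (bohrCoeffCLM lam) (fun i => (⟨f i, hf i⟩ : APalg k)) s

/-- The function with a prescribed absolutely convergent Bohr-Fourier series. -/
def fourierSeries (c : (Fin k → ℝ) → ℂ) : APB k := ∑' lam, c lam • apExp k lam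

theorem hasSum_fourierSeries (hc : Summable fun lam => ‖c lam‖) :
    HasSum (fun lam => c lam • apExp k lam) (fourierSeries c) :=
  (hc.of_norm_bounded fun lam => by
    rw [norm_smul]
    exact mul_le_of_le_one_right (norm_nonneg _) (norm_apExp_le lam)).hasSum

theorem fourierSeries_mem (hc : Summable fun lam => ‖c lam‖) : fourierSeries c ∈ APalg k :=
  mem_APalg_of_hasSum (hasSum_fourierSeries hc) fun lam => (APalg k).smul_mem (apExp_mem lam) _

theorem bohrCoeff_fourierSeries (hc : Summable fun lam => ‖c lam‖) (lam : Fin k → ℝ) :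
    bohrCoeff k (fourierSeries c) lam = c lam := by
  refine (hasSum_bohrCoeff (hasSum_fourierSeries hc)
    (fun lam => (APalg k).smul_mem (apExp_mem lam) _) lam).unique ?_
  convert hasSum_ite_eq lam (c lam) using 2 with mu
  rw [bohrCoeff_smul (apExp_mem mu), bohrCoeff_apExp, mul_ite, mul_one, mul_zero]
  exact if_ctx_congr Iff.rfl (fun h => by rw [h]) fun _ => rfl

theorem fourierSeries_bohrCoeff (hf : f ∈ APalg k) (hs : Summable fun lam => ‖bohrCoeff k f lam‖) :
    fourierSeries (bohrCoeff k f) = f :=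
  eq_of_bohrCoeff (fourierSeries_mem hs) hf fun lam => bohrCoeff_fourierSeries hs lam

theorem APWmem_fourierSeries (hc : Summable fun lam => ‖c lam‖) (hΔ : ∀ lam, c lam ≠ 0 → lam ∈ Δ) :
    APWmem k Δ (fourierSeries c) := by
  refine ⟨⟨fourierSeries_mem hc, fun lam hlam => hΔ lam ?_⟩, ?_⟩
  · exact bohrCoeff_fourierSeries hc lam ▸ hlam
  · simpa only [bohrCoeff_fourierSeries hc] using hc

theorem APWmem_inter {Δ' : Set (Fin k → ℝ)} (hf : APWmem k Δ f)
    (hΔ' : bohrSpectrum k f ⊆ Δ') : APWmem k (Δ ∩ Δ') f :=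
  ⟨⟨hf.1.1, Set.subset_inter hf.1.2 hΔ'⟩, hf.2⟩

theorem APWmem_zero (Δ : Set (Fin k → ℝ)) : APWmem k Δ 0 :=
  ⟨⟨zero_mem _, fun lam hlam => absurd (bohrCoeff_zero lam) hlam⟩, by
    simpa only [bohrCoeff_zero, norm_zero] using summable_zero⟩

theorem APWmem_add (hf : APWmem k Δ f) (hg : APWmem k Δ g) : APWmem k Δ (f + g) := by
  refine ⟨⟨add_mem hf.1.1 hg.1.1, fun lam hlam => ?_⟩, ?_⟩
  · by_contra hmem
    refine hlam ?_
    rw [bohrCoeff_add hf.1.1 hg.1.1, not_not.1 fun h => hmem (hf.1.2 h),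
      not_not.1 fun h => hmem (hg.1.2 h), add_zero]
  · simp only [bohrCoeff_add hf.1.1 hg.1.1]
    exact (hf.2.add hg.2).of_nonneg_of_le (fun _ => norm_nonneg _) fun _ => norm_add_le _ _

theorem APWmem_sum {ι : Type*} (s : Finset ι) {f : ι → APB k} (hf : ∀ i ∈ s, APWmem k Δ (f i)) :
    APWmem k Δ (∑ i ∈ s, f i) :=
  Finset.sum_induction f (APWmem k Δ) (fun _ _ => APWmem_add) (APWmem_zero Δ) hf

theorem hasSum_bohrCoeff_mul (hf : f ∈ APalg k) (hs : Summable fun lam => ‖bohrCoeff k f lam‖)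
    (hg : g ∈ APalg k) (lam : Fin k → ℝ) :
    HasSum (fun mu => bohrCoeff k f mu * bohrCoeff k g (lam - mu)) (bohrCoeff k ⇑(f * g) lam) := by
  have hseries := hasSum_fourierSeries hs
  rw [fourierSeries_bohrCoeff hf hs] at hseries
  refine (hasSum_bohrCoeff (hseries.mul_right g)
    (fun mu => mul_mem ((APalg k).smul_mem (apExp_mem mu) _) hg) lam).congr_fun fun mu => ?_
  rw [smul_mul_assoc, bohrCoeff_smul (mul_mem (apExp_mem mu) hg), bohrCoeff_apExp_mul]

theorem APWmem_mul (hΔ : ∀ x ∈ Δ, ∀ y ∈ Δ, x + y ∈ Δ) (hf : APWmem k Δ f) (hg : APWmem k Δ g) :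
    APWmem k Δ (f * g) := by
  have hsum := hasSum_bohrCoeff_mul hf.1.1 hf.2 hg.1.1
  refine ⟨⟨mul_mem hf.1.1 hg.1.1, fun lam hlam => ?_⟩, ?_⟩
  · by_contra hmem
    refine hlam ((hsum lam).unique ?_)
    convert hasSum_zero with mu
    by_contra hne
    have hadd := hΔ _ (hf.1.2 (left_ne_zero_of_mul hne)) _ (hg.1.2 (right_ne_zero_of_mul hne))
    exact hmem (add_sub_cancel mu lam ▸ hadd)
  · let e : (Fin k → ℝ) × (Fin k → ℝ) ≃ (Fin k → ℝ) × (Fin k → ℝ) :=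
      { toFun := fun q => (q.2, q.1 - q.2)
        invFun := fun q => (q.1 + q.2, q.1)
        left_inv := fun q => by simp
        right_inv := fun q => by simp }
    have hprod : Summable fun q : (Fin k → ℝ) × (Fin k → ℝ) =>
        ‖bohrCoeff k f q.2 * bohrCoeff k g (q.1 - q.2)‖ :=
      (e.summable_iff.2 (hf.2.mul_norm hg.2) :)
    refine hprod.prod.of_nonneg_of_le (fun _ => norm_nonneg _) fun lam => ?_
    rw [← (hsum lam).tsum_eq]
    exact norm_tsum_le_tsum_norm (hprod.prod_factor lam)

theorem boxAvg_star (T : ℝ) (f : APB k) : boxAvg T (star f) = star (boxAvg T f) := by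
  rw [boxAvg_apply, boxAvg_apply, star_mul', Complex.star_def, ← integral_conj,
    ← Complex.ofReal_inv, Complex.conj_ofReal]
  rfl

theorem bohrCoeff_star (hf : f ∈ APalg k) (lam : Fin k → ℝ) :
    bohrCoeff k ⇑(star f) lam = star (bohrCoeff k f (-lam)) := by
  apply bohrCoeff_eq_of_tendsto
  refine ((continuous_star.tendsto _).comp (tendsto_boxAvg_bohrCoeff hf (-lam))).congr fun T => ?_
  rw [Function.comp_apply, ← boxAvg_star, star_mul', star_apExp, neg_neg]

theorem hasSum_bohrCoeff_star_mul (hf : f ∈ APalg k)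
    (hs : Summable fun lam => ‖bohrCoeff k f lam‖) (hg : g ∈ APalg k) (lam : Fin k → ℝ) :
    HasSum (fun mu => star (bohrCoeff k f mu) * bohrCoeff k g (lam + mu))
      (bohrCoeff k ⇑(star f * g) lam) := by
  have hs' : Summable fun mu => ‖bohrCoeff k ⇑(star f) mu‖ := by
    refine ((Equiv.neg _).summable_iff.2 hs).congr fun mu => ?_
    rw [bohrCoeff_star hf, norm_star]
    rfl
  have hsum := (Equiv.neg _).hasSum_iff.2 (hasSum_bohrCoeff_mul (star_mem_APalg hf) hs' hg lam)
  refine hsum.congr_fun fun mu => ?_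
  rw [Function.comp_apply, Equiv.neg_apply, bohrCoeff_star hf, neg_neg, sub_neg_eq_add]

end WienerAlgebra

section WeightedPullback

universe u

variable {I I' : Type u}

/-- The Hilbert space `ℓ²(I)`. -/
abbrev L2 (I : Type u) : Type u := lp (fun _ : I => ℂ) 2

theorem sum_norm_sq_le (x : L2 I) (s : Finset I) : ∑ i ∈ s, ‖x i‖ ^ 2 ≤ ‖x‖ ^ 2 := by
  simpa using lp.sum_rpow_le_norm_rpow (p := 2) (by norm_num) x s

/-- The data of a weighted pullback `x ↦ (i ↦ coeff i * x (source i))` from `ℓ²(I)` to `ℓ²(I')`.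
The conditions make it a contraction; `source` is irrelevant where `coeff` vanishes. -/
structure WeightedPullback (I I' : Type u) where
  coeff : I' → ℂ
  source : I' → I
  norm_coeff_le : ∀ i, ‖coeff i‖ ≤ 1
  injOn_source : Set.InjOn source {i | coeff i ≠ 0}

namespace WeightedPullback

variable (W : WeightedPullback I I')

theorem sum_norm_sq_le (x : L2 I) (s : Finset I') :
    ∑ i ∈ s, ‖W.coeff i * x (W.source i)‖ ^ 2 ≤ ‖x‖ ^ 2 := by
  classical
  calc ∑ i ∈ s, ‖W.coeff i * x (W.source i)‖ ^ 2
      = ∑ i ∈ s with W.coeff i ≠ 0, ‖W.coeff i * x (W.source i)‖ ^ 2 := by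
        rw [Finset.sum_filter_of_ne]
        intro i _ h h0
        simp [h0] at h
    _ ≤ ∑ i ∈ s with W.coeff i ≠ 0, ‖x (W.source i)‖ ^ 2 := by
        gcongr with i
        rw [norm_mul]
        exact mul_le_of_le_one_left (norm_nonneg _) (W.norm_coeff_le i)
    _ = ∑ i ∈ (s.filter fun i => W.coeff i ≠ 0).image W.source, ‖x i‖ ^ 2 := by
        rw [Finset.sum_image]
        exact W.injOn_source.mono fun i hi => (Finset.mem_filter.1 (Finset.mem_coe.1 hi)).2
    _ ≤ ‖x‖ ^ 2 := ToeplitzCorona.sum_norm_sq_le x _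

/-- The weighted pullback as an operator. -/
def op : L2 I →L[ℂ] L2 I' :=
  LinearMap.mkContinuous
    { toFun := fun x => ⟨fun i => W.coeff i * x (W.source i),
        memℓp_gen' (C := ‖x‖ ^ 2) fun s => by simpa using W.sum_norm_sq_le x s⟩
      map_add' := fun x y => lp.ext (funext fun i => mul_add _ _ _)
      map_smul' := fun c x => lp.ext (funext fun i => mul_left_comm _ _ _) } 1
    (fun x => by
      rw [one_mul]
      refine lp.norm_le_of_forall_sum_le (by norm_num) (norm_nonneg _) fun s => ?_
      simpa using W.sum_norm_sq_le x s)

theorem op_apply (x : L2 I) (i : I') : W.op x i = W.coeff i * x (W.source i) := rfl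

theorem norm_op_le : ‖W.op‖ ≤ 1 :=
  LinearMap.mkContinuous_norm_le _ zero_le_one _

end WeightedPullback

/-- The diagonal operator with entries `φ`. -/
def diagOp (φ : I → ℂ) (hφ : ∀ i, ‖φ i‖ ≤ 1) : L2 I →L[ℂ] L2 I :=
  WeightedPullback.op ⟨φ, id, hφ, Function.injective_id.injOn⟩

theorem diagOp_apply (φ : I → ℂ) (hφ : ∀ i, ‖φ i‖ ≤ 1) (x : L2 I) (i : I) :
    diagOp φ hφ x i = φ i * x i := rfl

end WeightedPullback

section WienerOperators

universe u

variable {Γ I I' I'' : Type u} [AddCommGroup Γ] {g : I → Γ} {g' : I' → Γ} {g'' : I'' → Γ}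
  {d d' : Γ}

/-- `b` raises degrees by `d`, where `g` and `g'` are the degrees of the basis vectors. Stated as
an intertwining relation, it is the vanishing of all matrix entries of `b` off that diagonal. -/
def IsHomogeneous (g : I → Γ) (g' : I' → Γ) (d : Γ) (b : L2 I →L[ℂ] L2 I') : Prop :=
  ∀ (φ : Γ → ℂ) (h : ∀ x, ‖φ x‖ ≤ 1) (x : L2 I) (i : I'),
    b (diagOp (fun i => φ (g i)) (fun i => h (g i)) x) i = φ (g' i - d) * b x i

theorem WeightedPullback.isHomogeneous_op (W : WeightedPullback I I')
    (hW : ∀ i, W.coeff i ≠ 0 → g' i = g (W.source i) + d) : IsHomogeneous g g' d W.op := by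
  intro φ h x i
  rw [W.op_apply, W.op_apply, diagOp_apply]
  by_cases h0 : W.coeff i = 0
  · rw [h0, zero_mul, zero_mul, mul_zero]
  · rw [hW i h0, add_sub_cancel_right, mul_left_comm]

theorem IsHomogeneous.smul {b : L2 I →L[ℂ] L2 I'} (hb : IsHomogeneous g g' d b) (c : ℂ) :
    IsHomogeneous g g' d (c • b) := fun φ h x i =>
  (congrArg (c * ·) (hb φ h x i)).trans (mul_left_comm _ _ _)

theorem IsHomogeneous.comp {b : L2 I →L[ℂ] L2 I'} {b' : L2 I' →L[ℂ] L2 I''}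
    (hb' : IsHomogeneous g' g'' d' b') (hb : IsHomogeneous g g' d b) :
    IsHomogeneous g g'' (d + d') (b'.comp b) := by
  intro φ h x i
  have hbx : b (diagOp (fun i => φ (g i)) (fun i => h (g i)) x) =
      diagOp (fun i => φ (g' i - d)) (fun i => h (g' i - d)) (b x) :=
    lp.ext (funext fun j => hb φ h x j)
  rw [ContinuousLinearMap.comp_apply, hbx, ContinuousLinearMap.comp_apply,
    hb' (fun y => φ (y - d)) (fun y => h _) (b x) i, sub_sub, add_comm d]

/-- The Wiener class: `T` is an absolutely convergent sum of homogeneous operators. -/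
def IsWiener (g : I → Γ) (g' : I' → Γ) (T : L2 I →L[ℂ] L2 I') : Prop :=
  ∃ (J : Type u) (b : J → L2 I →L[ℂ] L2 I') (d : J → Γ), Summable (fun j => ‖b j‖) ∧
    HasSum b T ∧ ∀ j, IsHomogeneous g g' (d j) (b j)

namespace IsWiener

theorem smul {T : L2 I →L[ℂ] L2 I'} (hT : IsWiener g g' T) (c : ℂ) : IsWiener g g' (c • T) := by
  obtain ⟨J, b, d, hb, hT, hd⟩ := hT
  refine ⟨J, fun j => c • b j, d, ?_, hT.const_smul c, fun j => (hd j).smul c⟩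
  simpa only [norm_smul] using hb.mul_left ‖c‖

theorem add {T T' : L2 I →L[ℂ] L2 I'} (hT : IsWiener g g' T) (hT' : IsWiener g g' T') :
    IsWiener g g' (T + T') := by
  obtain ⟨J, b, d, hb, hT, hd⟩ := hT
  obtain ⟨J', b', d', hb', hT', hd'⟩ := hT'
  refine ⟨J ⊕ J', Sum.elim b b', Sum.elim d d', ?_, HasSum.sum hT hT', ?_⟩
  · exact (HasSum.sum (f := fun j => ‖Sum.elim b b' j‖) hb.hasSum hb'.hasSum).summable
  · rintro (j | j)
    · exact hd j
    · exact hd' j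

theorem comp {T : L2 I →L[ℂ] L2 I'} {T' : L2 I' →L[ℂ] L2 I''} (hT' : IsWiener g' g'' T')
    (hT : IsWiener g g' T) : IsWiener g g'' (T'.comp T) := by
  obtain ⟨J, b, d, hb, hT, hd⟩ := hT
  obtain ⟨J', b', d', hb', hT', hd'⟩ := hT'
  have hnorm : Summable fun q : J' × J => ‖(b' q.1).comp (b q.2)‖ :=
    (hb'.mul_of_nonneg hb (fun _ => norm_nonneg _) fun _ => norm_nonneg _).of_nonneg_of_le
      (fun _ => norm_nonneg _) fun q => ContinuousLinearMap.opNorm_comp_le _ _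
  refine ⟨J' × J, fun q => (b' q.1).comp (b q.2), fun q => d q.2 + d' q.1, hnorm, ?_,
    fun q => (hd' q.1).comp (hd q.2)⟩
  have houter : HasSum (fun j' => (b' j').comp T) (T'.comp T) :=
    hT'.mapL ((ContinuousLinearMap.compL ℂ (L2 I) (L2 I') (L2 I'')).flip T)
  have hinner : ∀ j', HasSum (fun j => (b' j').comp (b j)) ((b' j').comp T) := fun j' =>
    hT.mapL (ContinuousLinearMap.compL ℂ (L2 I) (L2 I') (L2 I'') (b' j'))
  exact (hnorm.of_norm.hasSum.prod_fiberwise hinner).unique houter ▸ hnorm.of_norm.hasSum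

end IsWiener

end WienerOperators

section TranslationInvariantOperators

variable {Γ H J : Type*} [AddCommGroup Γ] [TopologicalSpace Γ] [DiscreteTopology Γ]
  [NormedAddCommGroup H] [NormedSpace ℂ H]

variable (H) in
/-- The translation `f ↦ f (· - d)` of bounded functions on a discrete group. -/
def translationOp (d : Γ) : (Γ →ᵇ H) →L[ℂ] (Γ →ᵇ H) :=
  LinearMap.mkContinuous
    { toFun := fun f => f.compContinuous ⟨fun x => x - d, continuous_of_discreteTopology⟩
      map_add' := fun _ _ => rfl
      map_smul' := fun _ _ => rfl } 1
    (fun f => by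
      rw [one_mul]
      exact (BoundedContinuousFunction.norm_le (norm_nonneg _)).2 fun _ => f.norm_coe_le_norm _)

theorem translationOp_apply (d x : Γ) (f : Γ →ᵇ H) : translationOp H d f x = f (x - d) := rfl

theorem norm_translationOp_le (d : Γ) : ‖translationOp H d‖ ≤ 1 :=
  LinearMap.mkContinuous_norm_le _ zero_le_one _

variable (Γ H) in
/-- The Banach algebra of translation-invariant operators on bounded functions. It is not a
reducible synonym of the centralizer, so that its ring structure is found from its norm. -/
def TransInv : Type _ := Subalgebra.centralizer ℂ (Set.range (translationOp (Γ := Γ) H))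

namespace TransInv

instance : NormedRing (TransInv Γ H) :=
  inferInstanceAs (NormedRing (Subalgebra.centralizer ℂ (Set.range (translationOp H))))

instance : NormedAlgebra ℂ (TransInv Γ H) :=
  inferInstanceAs (NormedAlgebra ℂ (Subalgebra.centralizer ℂ (Set.range (translationOp H))))

instance [CompleteSpace H] : CompleteSpace (TransInv Γ H) :=
  IsClosed.completeSpace_coe (hs := Set.isClosed_centralizer (Set.range (translationOp H)))

/-- A translation-invariant operator, as an operator. -/
def toOp : TransInv Γ H →L[ℂ] (Γ →ᵇ H) →L[ℂ] (Γ →ᵇ H) :=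
  (Subalgebra.centralizer ℂ (Set.range (translationOp H))).toSubmodule.subtypeL

theorem toOp_injective : Function.Injective (toOp (Γ := Γ) (H := H)) := Subtype.val_injective

/-- An operator commuting with all translations, as a translation-invariant operator. -/
def ofOp (T : (Γ →ᵇ H) →L[ℂ] (Γ →ᵇ H))
    (h : ∀ d f, translationOp H d (T f) = T (translationOp H d f)) : TransInv Γ H :=
  ⟨T, Subalgebra.mem_centralizer_iff ℂ |>.2 <| by
    rintro _ ⟨d, rfl⟩
    exact ContinuousLinearMap.ext (h d)⟩

variable (Γ H) in
/-- The translations, as elements of the algebra of translation-invariant operators. -/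
def translation : AddChar Γ (TransInv Γ H) where
  toFun d := ofOp (translationOp H d) fun d' f => by
    ext x
    simp only [translationOp_apply, sub_right_comm]
  map_zero_eq_one' := toOp_injective <| by
    ext f x
    exact congrArg f (sub_zero x)
  map_add_eq_mul' c d := toOp_injective <| by
    ext f x
    exact congrArg f (sub_add_eq_sub_sub x c d)

theorem commute_translation (d : Γ) (T : TransInv Γ H) : Commute (translation Γ H d) T :=
  toOp_injective ((Subalgebra.mem_centralizer_iff ℂ).1 T.2 _ ⟨d, rfl⟩)

theorem norm_translation_le (d : Γ) : ‖translation Γ H d‖ ≤ 1 := norm_translationOp_le d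

variable (Γ H) in
/-- Pointwise application of an operator to a bounded function. -/
def pointwise : (H →L[ℂ] H) →L[ℂ] TransInv Γ H :=
  LinearMap.mkContinuous
    { toFun := fun b => ofOp (b.compLeftContinuousBounded Γ) fun _ _ => rfl
      map_add' := fun _ _ => rfl
      map_smul' := fun _ _ => rfl } 1 fun b => by
    refine ContinuousLinearMap.opNorm_le_bound _ (by positivity) fun f => ?_
    refine (BoundedContinuousFunction.norm_le (by positivity)).2 fun x => ?_
    rw [one_mul]
    exact b.le_opNorm_of_le (f.norm_coe_le_norm x)

theorem norm_pointwise_le (b : H →L[ℂ] H) : ‖pointwise Γ H b‖ ≤ ‖b‖ := by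
  simpa using (pointwise Γ H).le_of_opNorm_le (LinearMap.mkContinuous_norm_le _ zero_le_one _) b

theorem pointwise_comp (a b : H →L[ℂ] H) :
    pointwise Γ H (a.comp b) = pointwise Γ H a * pointwise Γ H b := rfl

theorem pointwise_id : pointwise Γ H (ContinuousLinearMap.id ℂ H) = 1 := rfl

variable {b : J → H →L[ℂ] H} (d : J → Γ)

theorem exists_mul_tsum_pointwise_mul_translation_eq_one [CompleteSpace H]
    (hb : Summable fun j => ‖b j‖)
    (h : ∀ χ : AddChar Γ Circle, ∃ a : H →L[ℂ] H,
      a.comp (∑' j, (χ (d j) : ℂ) • b j) = ContinuousLinearMap.id ℂ H) :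
    ∃ a, a * ∑' j, pointwise Γ H (b j) * translation Γ H (d j) = 1 := by
  refine exists_mul_tsum_eq_one_of_addChar (translation Γ H) commute_translation
    norm_translation_le d
    (hb.of_nonneg_of_le (fun j => norm_nonneg _) fun j => norm_pointwise_le (b j)) fun χ => ?_
  obtain ⟨a, ha⟩ := h χ
  have hs : Summable fun j => (χ (d j) : ℂ) • b j :=
    .of_norm <| by simpa only [norm_smul, Circle.norm_coe, one_mul] using hb
  refine ⟨pointwise Γ H a, ?_⟩
  simp only [← map_smul]
  rw [← (pointwise Γ H).map_tsum hs, ← pointwise_comp, ha, pointwise_id]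

theorem toOp_tsum_apply [CompleteSpace H] (hb : Summable fun j => ‖b j‖) (f : Γ →ᵇ H) (x : Γ) :
    toOp (∑' j, pointwise Γ H (b j) * translation Γ H (d j)) f x = ∑' j, b j (f (x - d j)) := by
  have hs : Summable fun j => pointwise Γ H (b j) * translation Γ H (d j) := by
    refine .of_norm_bounded hb fun j => ?_
    calc ‖pointwise Γ H (b j) * translation Γ H (d j)‖
        ≤ ‖pointwise Γ H (b j)‖ * ‖translation Γ H (d j)‖ := norm_mul_le _ _
      _ ≤ ‖b j‖ * 1 := by
        gcongr
        · exact norm_pointwise_le (b j)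
        · exact norm_translation_le (d j)
      _ = ‖b j‖ := mul_one _
  let eval : TransInv Γ H →L[ℂ] H := (BoundedContinuousFunction.evalCLM ℂ x).comp
    ((ContinuousLinearMap.apply ℂ (Γ →ᵇ H) f).comp toOp)
  exact eval.map_tsum hs

end TransInv

end TranslationInvariantOperators

theorem exists_bound_of_twisted_left_inverse {Γ H J : Type*} [AddCommGroup Γ]
    [NormedAddCommGroup H] [NormedSpace ℂ H] [CompleteSpace H] {b : J → H →L[ℂ] H}
    (d : J → Γ) (hb : Summable fun j => ‖b j‖)
    (h : ∀ χ : AddChar Γ Circle, ∃ a : H →L[ℂ] H,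
      a.comp (∑' j, (χ (d j) : ℂ) • b j) = ContinuousLinearMap.id ℂ H) :
    ∃ C : ℝ, 0 ≤ C ∧ ∀ (f : Γ → H) (K M : ℝ), (∀ x, ‖f x‖ ≤ K) → 0 ≤ M →
      (∀ x, ‖∑' j, b j (f (x - d j))‖ ≤ M) → ∀ x, ‖f x‖ ≤ C * M := by
  let _ : TopologicalSpace Γ := ⊥
  have : DiscreteTopology Γ := ⟨rfl⟩
  obtain ⟨a, ha⟩ := TransInv.exists_mul_tsum_pointwise_mul_translation_eq_one d hb h
  set X := ∑' j, TransInv.pointwise Γ H (b j) * TransInv.translation Γ H (d j) with hX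
  refine ⟨‖TransInv.toOp a‖, norm_nonneg _, fun f K M hK hM hfM x => ?_⟩
  let F : Γ →ᵇ H := .ofNormedAddCommGroup f continuous_of_discreteTopology K hK
  have hXF : ‖TransInv.toOp X F‖ ≤ M := (BoundedContinuousFunction.norm_le hM).2 fun y => by
    rw [hX, TransInv.toOp_tsum_apply d hb]
    exact hfM y
  calc ‖F x‖ ≤ ‖F‖ := F.norm_coe_le_norm x
    _ = ‖TransInv.toOp a (TransInv.toOp X F)‖ :=
        congrArg norm (congrArg (fun T => TransInv.toOp T F) ha).symm
    _ ≤ ‖TransInv.toOp a‖ * M := (TransInv.toOp a).le_opNorm_of_le hXF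

section DegreeProjections

universe u

variable {Γ I I' : Type u} {g : I → Γ} {g' : I' → Γ}

theorem norm_indicator_one_le {α : Type*} (s : Set α) (x : α) :
    ‖s.indicator (1 : α → ℂ) x‖ ≤ 1 :=
  (norm_indicator_le_norm_self _ x).trans_eq norm_one

/-- The projection of `ℓ²(I)` onto the vectors supported in degree `c`, for the degree map `g`. -/
def degreeProj (g : I → Γ) (c : Γ) : L2 I →L[ℂ] L2 I :=
  diagOp (fun i => ({c} : Set Γ).indicator 1 (g i)) fun _ => norm_indicator_one_le _ _

theorem degreeProj_apply_of_eq {c : Γ} {i : I} (h : g i = c) (x : L2 I) :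
    degreeProj g c x i = x i := by
  rw [degreeProj, diagOp_apply, Set.indicator_of_mem (Set.mem_singleton_iff.2 h), Pi.one_apply,
    one_mul]

theorem degreeProj_apply_of_ne {c : Γ} {i : I} (h : g i ≠ c) (x : L2 I) :
    degreeProj g c x i = 0 := by
  rw [degreeProj, diagOp_apply, Set.indicator_of_notMem (mt Set.mem_singleton_iff.1 h), zero_mul]

theorem norm_degreeProj_le (c : Γ) (x : L2 I) : ‖degreeProj g c x‖ ≤ ‖x‖ := by
  simpa using (degreeProj g c).le_of_opNorm_le (WeightedPullback.norm_op_le _) x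

theorem norm_apply_le_norm (x : L2 I) (i : I) : ‖x i‖ ≤ ‖x‖ :=
  lp.norm_apply_le_norm two_ne_zero x i

theorem norm_apply_le_norm_degreeProj (x : L2 I) (i : I) : ‖x i‖ ≤ ‖degreeProj g (g i) x‖ := by
  rw [← degreeProj_apply_of_eq (g := g) rfl x]
  exact norm_apply_le_norm _ i

theorem IsHomogeneous.apply_degreeProj [AddCommGroup Γ] {d : Γ} {b : L2 I →L[ℂ] L2 I'}
    (hb : IsHomogeneous g g' d b) (c : Γ) (x : L2 I) :
    b (degreeProj g (c - d) x) = degreeProj g' c (b x) := by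
  ext i
  rw [degreeProj, hb _ (norm_indicator_one_le _)]
  by_cases h : g' i = c
  · rw [degreeProj_apply_of_eq h, h, Set.indicator_of_mem (Set.mem_singleton _), Pi.one_apply,
      one_mul]
  · rw [degreeProj_apply_of_ne h, Set.indicator_of_notMem, zero_mul]
    exact fun h' => h (sub_left_injective h')

/-- Every degree is the degree of at most `n` basis vectors. -/
def FiberCardLE (g : I → Γ) (n : ℕ) : Prop :=
  ∀ (c : Γ) (s : Finset I), (∀ i ∈ s, g i = c) → s.card ≤ n

theorem FiberCardLE.norm_degreeProj_le {n : ℕ} (hg : FiberCardLE g n) (c : Γ) {x : L2 I} {M : ℝ}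
    (hM : 0 ≤ M) (hx : ∀ i, ‖x i‖ ≤ M) : ‖degreeProj g c x‖ ≤ n * M := by
  classical
  refine lp.norm_le_of_forall_sum_le (by norm_num) (by positivity) fun s => ?_
  simp only [ENNReal.toReal_ofNat, Real.rpow_ofNat]
  calc ∑ i ∈ s, ‖degreeProj g c x i‖ ^ 2
      = ∑ i ∈ s with g i = c, ‖degreeProj g c x i‖ ^ 2 := by
        rw [Finset.sum_filter_of_ne]
        intro i _ h
        by_contra h0
        simp [degreeProj_apply_of_ne h0] at h
    _ ≤ ∑ i ∈ s with g i = c, M ^ 2 := by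
        gcongr with i hi
        rw [degreeProj_apply_of_eq (Finset.mem_filter.1 hi).2]
        exact hx i
    _ = (s.filter fun i => g i = c).card * M ^ 2 := by rw [Finset.sum_const, nsmul_eq_mul]
    _ ≤ n * M ^ 2 := by
        gcongr
        exact hg c _ fun i hi => (Finset.mem_filter.1 hi).2
    _ ≤ (n * M) ^ 2 := by
        rw [mul_pow]
        gcongr
        exact_mod_cast Nat.le_self_pow two_ne_zero n

end DegreeProjections

section SupBounds

universe u

variable {Γ I I' : Type u} [AddCommGroup Γ] {g : I → Γ} {g' : I' → Γ} {n : ℕ}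

/-- `T` is bounded for the supremum norm on `ℓ²`. -/
def IsSupBounded (T : L2 I →L[ℂ] L2 I') : Prop :=
  ∃ C : ℝ, 0 ≤ C ∧ ∀ (y : L2 I) (M : ℝ), 0 ≤ M → (∀ i, ‖y i‖ ≤ M) → ∀ i, ‖T y i‖ ≤ C * M

theorem IsWiener.isSupBounded (hg : FiberCardLE g n) {T : L2 I →L[ℂ] L2 I'}
    (hT : IsWiener g g' T) : IsSupBounded T := by
  obtain ⟨J, b, d, hs, hT, hd⟩ := hT
  refine ⟨(∑' j, ‖b j‖) * n, by positivity, fun y M hM hy i => ?_⟩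
  have hTi : HasSum (fun j => b j y i) (T y i) :=
    hT.mapL ((lp.evalCLM ℂ (fun _ : I' => ℂ) 2 i).comp (ContinuousLinearMap.apply ℂ (L2 I') y))
  have hbi : ∀ j, ‖b j y i‖ ≤ ‖b j‖ * (n * M) := fun j => by
    calc ‖b j y i‖ ≤ ‖degreeProj g' (g' i) (b j y)‖ := norm_apply_le_norm_degreeProj _ i
      _ = ‖b j (degreeProj g (g' i - d j) y)‖ := by rw [(hd j).apply_degreeProj]
      _ ≤ ‖b j‖ * (n * M) := (b j).le_opNorm_of_le (hg.norm_degreeProj_le _ hM hy)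
  rw [← hTi.tsum_eq, mul_assoc]
  exact tsum_of_norm_bounded (hs.hasSum.mul_right _) hbi

/-- The diagonal unitary with entries `χ (g i)`. -/
def charOp (g : I → Γ) (χ : AddChar Γ Circle) : L2 I →L[ℂ] L2 I :=
  diagOp (fun i => (χ (g i) : ℂ)) fun _ => (Circle.norm_coe _).le

theorem charOp_inv_mul (g : I → Γ) (χ : AddChar Γ Circle) : charOp g χ⁻¹ * charOp g χ = 1 := by
  ext x i
  change ((χ⁻¹ (g i) : Circle) : ℂ) * ((χ (g i) : ℂ) * x i) = x i
  rw [← mul_assoc, ← Circle.coe_mul, AddChar.inv_apply', inv_mul_cancel, Circle.coe_one, one_mul]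

theorem IsHomogeneous.charOp_mul_mul_charOp_inv {d : Γ} {b : L2 I →L[ℂ] L2 I}
    (hb : IsHomogeneous g g d b) (χ : AddChar Γ Circle) :
    charOp g χ * (b * charOp g χ⁻¹) = (χ d : ℂ) • b := by
  ext x i
  change (χ (g i) : ℂ) * b (charOp g χ⁻¹ x) i = (χ d : ℂ) * b x i
  rw [charOp, hb (fun y => (χ⁻¹ y : Circle)) (fun _ => (Circle.norm_coe _).le), ← mul_assoc,
    ← Circle.coe_mul, AddChar.inv_apply, ← AddChar.map_add_eq_mul]
  congr 4
  abel

theorem exists_comp_tsum_smul_eq_id {J : Type*} {b : J → L2 I →L[ℂ] L2 I} {d : J → Γ}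
    {X Y : L2 I →L[ℂ] L2 I} (hX : HasSum b X) (hd : ∀ j, IsHomogeneous g g (d j) (b j))
    (hYX : Y * X = 1) (χ : AddChar Γ Circle) :
    ∃ a : L2 I →L[ℂ] L2 I, a.comp (∑' j, (χ (d j) : ℂ) • b j) = ContinuousLinearMap.id ℂ _ := by
  refine ⟨charOp g χ * (Y * charOp g χ⁻¹), ?_⟩
  have hsum : HasSum (fun j => (χ (d j) : ℂ) • b j) (charOp g χ * (X * charOp g χ⁻¹)) := by
    simpa only [(hd _).charOp_mul_mul_charOp_inv] using
      (hX.mul_right (charOp g χ⁻¹)).mul_left (charOp g χ)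
  rw [hsum.tsum_eq]
  change charOp g χ * (Y * charOp g χ⁻¹) * (charOp g χ * (X * charOp g χ⁻¹)) = 1
  calc charOp g χ * (Y * charOp g χ⁻¹) * (charOp g χ * (X * charOp g χ⁻¹))
      = charOp g χ * Y * (charOp g χ⁻¹ * charOp g χ) * X * charOp g χ⁻¹ := by
        simp only [mul_assoc]
    _ = charOp g χ * (Y * X) * charOp g χ⁻¹ := by rw [charOp_inv_mul, mul_one, mul_assoc _ Y]
    _ = 1 := by simpa only [hYX, mul_one, inv_inv] using charOp_inv_mul g χ⁻¹

theorem IsWiener.isSupBounded_inverse (hg : FiberCardLE g n) {X Y : L2 I →L[ℂ] L2 I}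
    (hX : IsWiener g g X) (hXY : X * Y = 1) (hYX : Y * X = 1) : IsSupBounded Y := by
  obtain ⟨J, b, d, hs, hX, hd⟩ := hX
  obtain ⟨C, hC, h⟩ :=
    exists_bound_of_twisted_left_inverse d hs (exists_comp_tsum_smul_eq_id hX hd hYX)
  refine ⟨C * n, by positivity, fun y M hM hy i => ?_⟩
  have hXYy : X (Y y) = y := congrArg (fun T => T y) hXY
  have hconv : ∀ c, HasSum (fun j => b j (degreeProj g (c - d j) (Y y))) (degreeProj g c y) := by
    intro c
    simp only [(hd _).apply_degreeProj]
    simpa [hXYy] using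
      hX.mapL ((degreeProj g c).comp (ContinuousLinearMap.apply ℂ (L2 I) (Y y)))
  calc ‖Y y i‖ ≤ ‖degreeProj g (g i) (Y y)‖ := norm_apply_le_norm_degreeProj _ i
    _ ≤ C * (n * M) := by
        refine h (fun c => degreeProj g c (Y y)) ‖Y y‖ (n * M)
          (fun c => norm_degreeProj_le c _) (by positivity) (fun c => ?_) (g i)
        rw [(hconv c).tsum_eq]
        exact hg.norm_degreeProj_le c hM hy
    _ = C * n * M := (mul_assoc _ _ _).symm

end SupBounds

section RestrictionToL1

universe u

variable {Γ I I' : Type u}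

/-- The space `ℓ¹(I)`. -/
abbrev L1 (I : Type u) : Type u := lp (fun _ : I => ℂ) 1

/-- The inclusion of `ℓ¹` in `ℓ²`. -/
def toL2 : L1 I →ₗ[ℂ] L2 I := lp.linearMapOfLE ℂ (fun _ => ℂ) one_le_two

theorem toL2_apply (x : L1 I) (i : I) : toL2 x i = x i := rfl

theorem toL2_injective : Function.Injective (toL2 (I := I)) := fun _ _ h =>
  lp.ext (funext fun i => congrArg (fun z : L2 I => z i) h)

theorem hasSum_norm (x : L1 I) : HasSum (fun i => ‖x i‖) ‖x‖ := by
  simpa using lp.hasSum_norm (by norm_num) x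

/-- `T` maps `ℓ¹` boundedly to `ℓ¹`. -/
def RestrictsToL1 (T : L2 I →L[ℂ] L2 I') : Prop :=
  ∃ T₁ : L1 I →L[ℂ] L1 I', ∀ x, toL2 (T₁ x) = T (toL2 x)

theorem restrictsToL1_of_sum_le {T : L2 I →L[ℂ] L2 I'} {C : ℝ}
    (h : ∀ (x : L1 I) (s : Finset I'), ∑ i ∈ s, ‖T (toL2 x) i‖ ≤ C * ‖x‖) : RestrictsToL1 T := by
  choose f hf using fun x => show ∃ y : L1 I', toL2 y = T (toL2 x) from
    ⟨⟨T (toL2 x), memℓp_gen' (C := C * ‖x‖) fun s => by simpa using h x s⟩, rfl⟩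
  let T₁ : L1 I →ₗ[ℂ] L1 I' :=
    { toFun := f
      map_add' := fun x y => toL2_injective <| by simp only [map_add, hf]
      map_smul' := fun c x => toL2_injective <| by simp only [map_smul, hf, RingHom.id_apply] }
  refine ⟨T₁.mkContinuous C fun x => ?_, hf⟩
  refine lp.norm_le_of_forall_sum_le (by norm_num) (by simpa using h x ∅) fun s => ?_
  have hx : ∀ i, T₁ x i = T (toL2 x) i := fun i => by rw [← hf, toL2_apply]; rfl
  simpa only [ENNReal.toReal_one, Real.rpow_one, hx] using h x s

theorem exists_inner_eq_sum_norm (x : L2 I) (s : Finset I) :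
    ∃ y : L2 I, (∀ i, ‖y i‖ ≤ 1) ∧ inner ℂ y x = ((∑ i ∈ s, ‖x i‖ : ℝ) : ℂ) := by
  classical
  choose c hc hcx using fun i => Complex.exists_norm_eq_mul_self (x i)
  refine ⟨∑ i ∈ s, lp.single 2 i (star (c i)), fun i => ?_, ?_⟩
  · rw [lp.coeFn_sum, Finset.sum_apply]
    simp only [lp.single_apply, Pi.single_apply, Finset.sum_ite_eq]
    split_ifs
    · rw [norm_star, hc]
    · rw [norm_zero]
      exact zero_le_one
  · rw [sum_inner, Complex.ofReal_sum]
    refine Finset.sum_congr rfl fun i _ => ?_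
    rw [lp.inner_single_left, hcx, RCLike.inner_apply, mul_comm]
    exact congrArg (· * x i) (star_star (c i))

theorem IsSupBounded.restrictsToL1 {T : L2 I →L[ℂ] L2 I'}
    (hT : IsSupBounded (ContinuousLinearMap.adjoint T)) : RestrictsToL1 T := by
  obtain ⟨C, -, h⟩ := hT
  refine restrictsToL1_of_sum_le (C := C) fun x s => ?_
  obtain ⟨y, hy, hyx⟩ := exists_inner_eq_sum_norm (T (toL2 x)) s
  have hsum := lp.hasSum_inner (𝕜 := ℂ) (ContinuousLinearMap.adjoint T y) (toL2 x)
  rw [ContinuousLinearMap.adjoint_inner_left, hyx] at hsum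
  calc ∑ i ∈ s, ‖T (toL2 x) i‖
      ≤ ‖((∑ i ∈ s, ‖T (toL2 x) i‖ : ℝ) : ℂ)‖ := by
        rw [Complex.norm_real]
        exact le_abs_self _
    _ ≤ C * ‖x‖ := by
        rw [← hsum.tsum_eq]
        refine tsum_of_norm_bounded ((hasSum_norm x).mul_left C) fun i => ?_
        refine (norm_inner_le_norm (𝕜 := ℂ) _ _).trans ?_
        rw [toL2_apply]
        gcongr
        simpa using h y 1 zero_le_one hy i

variable [AddCommGroup Γ] {g : I → Γ} {g' : I' → Γ} {n : ℕ}

theorem IsWiener.restrictsToL1 (hg' : FiberCardLE g' n) {T : L2 I →L[ℂ] L2 I'}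
    (hT : IsWiener g' g (ContinuousLinearMap.adjoint T)) : RestrictsToL1 T :=
  (hT.isSupBounded hg').restrictsToL1

theorem IsWiener.restrictsToL1_inverse (hg : FiberCardLE g n) {X Y : L2 I →L[ℂ] L2 I}
    (hX : IsWiener g g (ContinuousLinearMap.adjoint X)) (hXY : X * Y = 1) (hYX : Y * X = 1) :
    RestrictsToL1 Y := by
  refine (hX.isSupBounded_inverse hg ?_ ?_).restrictsToL1
  · simpa only [ContinuousLinearMap.star_eq_adjoint, star_mul, star_one] using congrArg star hYX
  · simpa only [ContinuousLinearMap.star_eq_adjoint, star_mul, star_one] using congrArg star hXY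

end RestrictionToL1

section StandardBasis

universe u

variable {I I' : Type u}

open scoped ENNReal

/-- The standard basis vector of `ℓᵖ(I)` at `q`. -/
def stdBasis (p : ℝ≥0∞) (q : I) : lp (fun _ : I => ℂ) p := by
  classical exact lp.single p q 1

theorem stdBasis_eq_single [DecidableEq I] (p : ℝ≥0∞) (q : I) :
    stdBasis p q = lp.single p q (1 : ℂ) := by
  rw [stdBasis]
  congr
  exact Subsingleton.elim _ _

theorem stdBasis_self (p : ℝ≥0∞) (q : I) : stdBasis p q q = 1 := by
  classical rw [stdBasis_eq_single, lp.single_apply_self]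

theorem stdBasis_of_ne (p : ℝ≥0∞) {q r : I} (h : r ≠ q) : stdBasis p q r = 0 := by
  classical rw [stdBasis_eq_single, lp.single_apply_ne _ _ _ h]

theorem inner_stdBasis_left (q : I) (x : L2 I) : inner ℂ (stdBasis 2 q) x = x q := by
  classical
  rw [stdBasis_eq_single, lp.inner_single_left, RCLike.inner_apply, map_one, mul_one]

theorem hasSum_smul_stdBasis (x : L2 I) : HasSum (fun q => x q • stdBasis 2 q) x := by
  classical
  refine (lp.hasSum_single (by norm_num) x).congr_fun fun q => ?_
  rw [stdBasis_eq_single, ← lp.single_smul, smul_eq_mul, mul_one]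

theorem hasSum_mul_apply_stdBasis (T : L2 I →L[ℂ] L2 I') (x : L2 I) (r : I') :
    HasSum (fun q => x q * T (stdBasis 2 q) r) (T x r) := by
  refine ((hasSum_smul_stdBasis x).mapL
    ((lp.evalCLM ℂ (fun _ : I' => ℂ) 2 r).comp T)).congr_fun fun q => ?_
  rw [map_smul]
  rfl

theorem clm_ext_stdBasis {T T' : L2 I →L[ℂ] L2 I'}
    (h : ∀ q r, T (stdBasis 2 q) r = T' (stdBasis 2 q) r) : T = T' := by
  ext x r
  refine (hasSum_mul_apply_stdBasis T x r).unique ?_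
  simpa only [h] using hasSum_mul_apply_stdBasis T' x r

theorem adjoint_stdBasis_apply (T : L2 I →L[ℂ] L2 I') (q : I) (r : I') :
    ContinuousLinearMap.adjoint T (stdBasis 2 r) q = star (T (stdBasis 2 q) r) := by
  rw [← inner_stdBasis_left q, ContinuousLinearMap.adjoint_inner_right, ← inner_conj_symm,
    inner_stdBasis_left]
  rfl

end StandardBasis

section ToeplitzOperators

universe u

variable {Γ ι κ : Type u} {Δ : Set Γ}

/-- The degree of a basis vector of the column space `ℓ²(ι × Δ)`. -/
def degree (q : ι × ↥Δ) : Γ := q.2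

theorem fiberCardLE_degree [Finite ι] :
    FiberCardLE (degree : ι × ↥Δ → Γ) (Nat.card ι) := by
  classical
  have := Fintype.ofFinite ι
  intro c s hs
  calc s.card = (s.image Prod.fst).card := by
        rw [Finset.card_image_of_injOn]
        intro q hq r hr h
        exact Prod.ext h (Subtype.ext ((hs q hq).trans (hs r hr).symm))
    _ ≤ Nat.card ι := (Finset.card_le_univ _).trans_eq Fintype.card_eq_nat_card

variable [AddCommGroup Γ] {c c' : ι → κ → Γ → ℂ} {T T' : L2 (κ × ↥Δ) →L[ℂ] L2 (ι × ↥Δ)}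

/-- `T` is the compression to `Δ` of the convolution with the matrix symbol whose coefficients
are `c`. -/
def IsToeplitz (c : ι → κ → Γ → ℂ) (T : L2 (κ × ↥Δ) →L[ℂ] L2 (ι × ↥Δ)) : Prop :=
  ∀ q r, T (stdBasis 2 q) r = c r.1 q.1 (degree r - degree q)

theorem IsToeplitz.unique (h : IsToeplitz c T) (h' : IsToeplitz c T') : T = T' :=
  clm_ext_stdBasis fun q r => by rw [h, h']

theorem IsToeplitz.sub (h : IsToeplitz c T) (h' : IsToeplitz c' T') :
    IsToeplitz (c - c') (T - T') := fun q r => congrArg₂ (· - ·) (h q r) (h' q r)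

theorem IsToeplitz.adjoint (h : IsToeplitz c T) :
    IsToeplitz (fun j i x => star (c i j (-x))) (ContinuousLinearMap.adjoint T) := fun q r => by
  rw [adjoint_stdBasis_apply, h, ← neg_sub (degree r)]

open Classical in
/-- The elementary Toeplitz operator `e_{(j,μ)} ↦ e_{(i,μ+x)}`, compressed to `Δ`. -/
def elementaryToeplitz (Δ : Set Γ) (i : ι) (j : κ) (x : Γ) :
    WeightedPullback (κ × ↥Δ) (ι × ↥Δ) where
  coeff r := if r.1 = i ∧ degree r - x ∈ Δ then 1 else 0
  source r := (j, if h : degree r - x ∈ Δ then ⟨degree r - x, h⟩ else r.2)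
  norm_coeff_le r := by split_ifs <;> simp
  injOn_source r hr r' hr' hs := by
    have hr : r.1 = i ∧ degree r - x ∈ Δ := (ite_ne_right_iff.1 hr).1
    have hr' : r'.1 = i ∧ degree r' - x ∈ Δ := (ite_ne_right_iff.1 hr').1
    have hdeg := congrArg (fun q => q.2.1) hs
    simp only [dif_pos hr.2, dif_pos hr'.2] at hdeg
    exact Prod.ext (hr.1.trans hr'.1.symm) (Subtype.ext (sub_left_injective hdeg))

open Classical in
theorem degree_source_elementaryToeplitz {i : ι} {j : κ} {x : Γ} {r : ι × ↥Δ}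
    (hr : (elementaryToeplitz Δ i j x).coeff r ≠ 0) :
    degree ((elementaryToeplitz Δ i j x).source r) = degree r - x :=
  congrArg Subtype.val (dif_pos (ite_ne_right_iff.1 hr).1.2)

open Classical in
theorem elementaryToeplitz_op_stdBasis (i : ι) (j : κ) (x : Γ) (q : κ × ↥Δ) (r : ι × ↥Δ) :
    (elementaryToeplitz Δ i j x).op (stdBasis 2 q) r =
      if (i, j, x) = (r.1, q.1, degree r - degree q) then 1 else 0 := by
  rw [WeightedPullback.op_apply]
  split_ifs with h
  · obtain ⟨rfl, rfl, rfl⟩ : i = r.1 ∧ j = q.1 ∧ x = degree r - degree q := by simpa using h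
    have hcoeff : (elementaryToeplitz Δ r.1 q.1 (degree r - degree q)).coeff r = 1 :=
      if_pos ⟨rfl, by rw [sub_sub_cancel]; exact q.2.2⟩
    have hsource : (elementaryToeplitz Δ r.1 q.1 (degree r - degree q)).source r = q := by
      refine Prod.ext rfl (Subtype.ext ?_)
      exact (degree_source_elementaryToeplitz (hcoeff ▸ one_ne_zero)).trans (sub_sub_cancel _ _)
    rw [hcoeff, hsource, stdBasis_self, mul_one]
  · by_cases hr : (elementaryToeplitz Δ i j x).coeff r = 0
    · rw [hr, zero_mul]
    · rw [stdBasis_of_ne, mul_zero]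
      rintro rfl
      refine h (Prod.ext (ite_ne_right_iff.1 hr).1.1.symm (Prod.ext rfl ?_))
      rw [degree_source_elementaryToeplitz hr, sub_sub_cancel]

theorem isHomogeneous_elementaryToeplitz (i : ι) (j : κ) (x : Γ) :
    IsHomogeneous degree degree x (elementaryToeplitz Δ i j x).op :=
  WeightedPullback.isHomogeneous_op _ fun r hr => by
    rw [degree_source_elementaryToeplitz hr, sub_add_cancel]

theorem norm_smul_elementaryToeplitz_le (a : ℂ) (i : ι) (j : κ) (x : Γ) :
    ‖a • (elementaryToeplitz Δ i j x).op‖ ≤ ‖a‖ := by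
  rw [norm_smul]
  exact mul_le_of_le_one_right (norm_nonneg _) (WeightedPullback.norm_op_le _)

/-- The Toeplitz operator whose matrix symbol has the coefficients `c`. -/
def toeplitzOp (Δ : Set Γ) (c : ι → κ → Γ → ℂ) : L2 (κ × ↥Δ) →L[ℂ] L2 (ι × ↥Δ) :=
  ∑' q : ι × κ × Γ, c q.1 q.2.1 q.2.2 • (elementaryToeplitz Δ q.1 q.2.1 q.2.2).op

omit [AddCommGroup Γ] in
theorem summable_norm_symbol [Finite ι] [Finite κ] (hc : ∀ i j, Summable fun x => ‖c i j x‖) :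
    Summable fun q : ι × κ × Γ => ‖c q.1 q.2.1 q.2.2‖ := by
  refine (summable_prod_of_nonneg fun _ => norm_nonneg _).2 ⟨fun i => ?_, .of_finite⟩
  exact (summable_prod_of_nonneg fun _ => norm_nonneg _).2 ⟨fun j => hc i j, .of_finite⟩

theorem norm_toeplitzOp_le [Fintype ι] [Fintype κ]
    (hc : ∀ i j, Summable fun x => ‖c i j x‖) :
    ‖toeplitzOp Δ c‖ ≤ ∑ i, ∑ j, ∑' x, ‖c i j x‖ := by
  have hs := summable_norm_symbol hc
  refine (tsum_of_norm_bounded hs.hasSum fun q =>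
    norm_smul_elementaryToeplitz_le _ _ _ _).trans_eq ?_
  rw [hs.tsum_prod, tsum_fintype]
  exact Finset.sum_congr rfl fun i _ => ((hs.prod_factor i).tsum_prod).trans (tsum_fintype _)

variable [Finite ι] [Finite κ]

theorem summable_norm_smul_elementaryToeplitz (Δ : Set Γ)
    (hc : ∀ i j, Summable fun x => ‖c i j x‖) :
    Summable fun q : ι × κ × Γ =>
      ‖c q.1 q.2.1 q.2.2 • (elementaryToeplitz Δ q.1 q.2.1 q.2.2).op‖ :=
  (summable_norm_symbol hc).of_nonneg_of_le (fun _ => norm_nonneg _) fun _ =>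
    norm_smul_elementaryToeplitz_le _ _ _ _

theorem isToeplitz_toeplitzOp (hc : ∀ i j, Summable fun x => ‖c i j x‖) :
    IsToeplitz c (toeplitzOp Δ c) := by
  classical
  intro q r
  refine ((summable_norm_smul_elementaryToeplitz Δ hc).of_norm.hasSum.mapL
    ((lp.evalCLM ℂ (fun _ : ι × ↥Δ => ℂ) 2 r).comp
      (ContinuousLinearMap.apply ℂ (L2 (ι × ↥Δ)) (stdBasis 2 q)))).unique ?_
  refine (hasSum_ite_eq (r.1, q.1, degree r - degree q)
    (c r.1 q.1 (degree r - degree q))).congr_fun fun z => ?_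
  change c z.1 z.2.1 z.2.2 * (elementaryToeplitz Δ z.1 z.2.1 z.2.2).op (stdBasis 2 q) r = _
  rw [elementaryToeplitz_op_stdBasis, mul_ite, mul_one, mul_zero]
  by_cases hz : z = (r.1, q.1, degree r - degree q)
  · subst hz
    simp only [if_true]
  · rw [if_neg hz, if_neg hz]

theorem IsToeplitz.isWiener (h : IsToeplitz c T) (hc : ∀ i j, Summable fun x => ‖c i j x‖) :
    IsWiener degree degree T := by
  have hs := summable_norm_smul_elementaryToeplitz Δ hc
  rw [h.unique (isToeplitz_toeplitzOp hc)]
  exact ⟨ι × κ × Γ, fun q => c q.1 q.2.1 q.2.2 • (elementaryToeplitz Δ q.1 q.2.1 q.2.2).op,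
    fun q => q.2.2, hs, hs.of_norm.hasSum,
    fun q => (isHomogeneous_elementaryToeplitz _ _ _).smul _⟩

theorem IsToeplitz.isWiener_adjoint (h : IsToeplitz c T)
    (hc : ∀ i j, Summable fun x => ‖c i j x‖) :
    IsWiener degree degree (ContinuousLinearMap.adjoint T) := by
  refine h.adjoint.isWiener fun j i => ?_
  simp only [norm_star]
  exact (Equiv.neg Γ).summable_iff (f := fun x => ‖c i j x‖) |>.2 (hc i j)

end ToeplitzOperators

section BackwardShifts

universe u

variable {Γ ι κ : Type u} {Δ : Set Γ} [AddCommGroup Γ]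

/-- The backward shift by `x ∈ Δ`, the compression of the multiplication by `e_{-x}`. -/
def backwardShift (ι : Type u) (hΔ : ∀ x ∈ Δ, ∀ y ∈ Δ, x + y ∈ Δ) (x : ↥Δ) :
    L2 (ι × ↥Δ) →L[ℂ] L2 (ι × ↥Δ) :=
  WeightedPullback.op
    { coeff := fun _ => 1
      source := fun r => (r.1, ⟨r.2 + x, hΔ _ r.2.2 _ x.2⟩)
      norm_coeff_le := fun _ => norm_one.le
      injOn_source := fun _ _ _ _ h => Prod.ext (congrArg (fun q => q.1) h) <| Subtype.ext <|
        add_left_injective x.1 (congrArg (fun q => q.2.1) h) }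

variable (hΔ : ∀ x ∈ Δ, ∀ y ∈ Δ, x + y ∈ Δ) (x : ↥Δ)

theorem backwardShift_apply (z : L2 (ι × ↥Δ)) (r : ι × ↥Δ) :
    backwardShift ι hΔ x z r = z (r.1, ⟨r.2 + x, hΔ _ r.2.2 _ x.2⟩) :=
  one_mul _

theorem backwardShift_stdBasis_of_mem {q : ι × ↥Δ} (hq : (q.2 - x : Γ) ∈ Δ) :
    backwardShift ι hΔ x (stdBasis 2 q) = stdBasis 2 (q.1, ⟨q.2 - x, hq⟩) := by
  ext r
  rw [backwardShift_apply]
  by_cases hr : r = (q.1, ⟨q.2 - x, hq⟩)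
  · subst hr
    rw [stdBasis_self]
    convert stdBasis_self 2 q
    exact sub_add_cancel _ _
  · rw [stdBasis_of_ne 2 hr, stdBasis_of_ne]
    rintro rfl
    exact hr (Prod.ext rfl (Subtype.ext (add_sub_cancel_right _ _).symm))

theorem backwardShift_stdBasis_of_notMem {q : ι × ↥Δ} (hq : (q.2 - x : Γ) ∉ Δ) :
    backwardShift ι hΔ x (stdBasis 2 q) = 0 := by
  ext r
  rw [backwardShift_apply, stdBasis_of_ne]
  · rfl
  · rintro rfl
    exact hq (by simp)

theorem IsToeplitz.backwardShift_adjoint {c : ι → κ → Γ → ℂ}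
    {T : L2 (κ × ↥Δ) →L[ℂ] L2 (ι × ↥Δ)} (h : IsToeplitz c T)
    (hc : ∀ i j, Function.support (c i j) ⊆ Δ) (z : L2 (ι × ↥Δ)) :
    backwardShift κ hΔ x (ContinuousLinearMap.adjoint T z) =
      ContinuousLinearMap.adjoint T (backwardShift ι hΔ x z) := by
  suffices hcomp : (backwardShift κ hΔ x).comp (ContinuousLinearMap.adjoint T) =
      (ContinuousLinearMap.adjoint T).comp (backwardShift ι hΔ x) from
    congrArg (fun S => S z) hcomp
  refine clm_ext_stdBasis fun q r => ?_
  rw [ContinuousLinearMap.comp_apply, ContinuousLinearMap.comp_apply, backwardShift_apply,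
    h.adjoint]
  by_cases hq : (q.2 - x : Γ) ∈ Δ
  · rw [backwardShift_stdBasis_of_mem hΔ x hq, h.adjoint]
    simp only [degree]
    congr 3
    abel
  · rw [backwardShift_stdBasis_of_notMem hΔ x hq, map_zero, lp.coeFn_zero, Pi.zero_apply,
      star_eq_zero]
    by_contra h0
    refine hq ?_
    convert hΔ _ (hc _ _ h0) _ r.2.2 using 1
    simp only [degree]
    abel

end BackwardShifts

section Columns

variable {k : ℕ} {Δ : Set (Fin k → ℝ)} {ι κ : Type}

theorem hasSum_restrict {Γ E : Type*} {Δ : Set Γ} [AddCommMonoid E] [TopologicalSpace E]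
    {h : Γ → E} {a : E} (h0 : ∀ lam, lam ∉ Δ → h lam = 0) :
    HasSum (fun lam : ↥Δ => h lam.1) a ↔ HasSum h a :=
  hasSum_subtype_iff_of_support_subset fun lam hlam => not_not.1 fun hn => hlam (h0 lam hn)

/-- The coefficients of the `i`-th entry of a column, extended by zero off `Δ`. -/
def entryCoeff (x : L1 (ι × ↥Δ)) (i : ι) : (Fin k → ℝ) → ℂ :=
  Function.extend Subtype.val (fun ν => x (i, ν)) 0

theorem entryCoeff_coe (x : L1 (ι × ↥Δ)) (i : ι) (ν : ↥Δ) : entryCoeff x i ν = x (i, ν) :=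
  Subtype.val_injective.extend_apply _ _ ν

theorem entryCoeff_of_notMem (x : L1 (ι × ↥Δ)) (i : ι) {lam : Fin k → ℝ} (h : lam ∉ Δ) :
    entryCoeff x i lam = 0 :=
  Function.extend_apply' _ _ _ fun ⟨ν, hν⟩ => h (hν ▸ ν.2)

theorem entryCoeff_add (x y : L1 (ι × ↥Δ)) (i : ι) :
    entryCoeff (x + y) i = entryCoeff x i + entryCoeff y i := by
  rw [entryCoeff, entryCoeff, entryCoeff, ← Function.extend_add, add_zero]
  rfl

theorem entryCoeff_smul (a : ℂ) (x : L1 (ι × ↥Δ)) (i : ι) :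
    entryCoeff (a • x) i = a • entryCoeff x i := by
  rw [entryCoeff, entryCoeff, ← Function.extend_smul, smul_zero]
  rfl

theorem hasSum_norm_entryCoeff (x : L1 (ι × ↥Δ)) (i : ι) :
    HasSum (fun lam => ‖entryCoeff x i lam‖) (∑' ν : ↥Δ, ‖x (i, ν)‖) := by
  rw [← hasSum_restrict (Δ := Δ) fun lam hlam => by rw [entryCoeff_of_notMem x i hlam, norm_zero]]
  simp only [entryCoeff_coe]
  exact ((hasSum_norm x).summable.prod_factor i).hasSum

theorem sum_tsum_norm_entryCoeff [Fintype ι] (x : L1 (ι × ↥Δ)) :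
    ∑ i, ∑' lam, ‖entryCoeff x i lam‖ = ‖x‖ := by
  rw [← (hasSum_norm x).tsum_eq, (hasSum_norm x).summable.tsum_prod, tsum_fintype]
  exact Finset.sum_congr rfl fun i _ => (hasSum_norm_entryCoeff x i).tsum_eq

/-- The `i`-th entry of the column of Wiener functions with the coordinates `x`. -/
def columnFn (i : ι) : L1 (ι × ↥Δ) →ₗ[ℂ] APB k where
  toFun x := fourierSeries (entryCoeff x i)
  map_add' x y := (hasSum_fourierSeries (hasSum_norm_entryCoeff (x + y) i).summable).unique <| by
    refine ((hasSum_fourierSeries (hasSum_norm_entryCoeff x i).summable).add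
      (hasSum_fourierSeries (hasSum_norm_entryCoeff y i).summable)).congr_fun fun lam => ?_
    rw [entryCoeff_add, Pi.add_apply, add_smul]
  map_smul' a x := (hasSum_fourierSeries (hasSum_norm_entryCoeff (a • x) i).summable).unique <| by
    refine ((hasSum_fourierSeries (hasSum_norm_entryCoeff x i).summable).const_smul a).congr_fun
      fun lam => ?_
    rw [entryCoeff_smul, Pi.smul_apply, smul_assoc]

theorem bohrCoeff_columnFn (i : ι) (x : L1 (ι × ↥Δ)) :
    bohrCoeff k (columnFn i x) = entryCoeff x i :=
  funext (bohrCoeff_fourierSeries (hasSum_norm_entryCoeff x i).summable)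

theorem APWmem_columnFn (i : ι) (x : L1 (ι × ↥Δ)) : APWmem k Δ (columnFn i x) :=
  APWmem_fourierSeries (hasSum_norm_entryCoeff x i).summable fun _ h =>
    not_not.1 fun hn => h (entryCoeff_of_notMem x i hn)

theorem columnFn_mem (i : ι) (x : L1 (ι × ↥Δ)) : columnFn i x ∈ APalg k :=
  (APWmem_columnFn i x).1.1

/-- `T` is the Toeplitz operator of the matrix `F` over the Wiener algebra of `Δ`. -/
structure IsAnalyticToeplitz (F : ι → κ → APB k)
    (T : L2 (κ × ↥Δ) →L[ℂ] L2 (ι × ↥Δ)) : Prop where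
  mem : ∀ i j, APWmem k Δ (F i j)
  isToeplitz : IsToeplitz (fun i j => bohrCoeff k (F i j)) T

variable {F : ι → κ → APB k} {T : L2 (κ × ↥Δ) →L[ℂ] L2 (ι × ↥Δ)}

section RestrictsToL1

variable [Finite ι] [Finite κ]

theorem IsAnalyticToeplitz.isWiener (hT : IsAnalyticToeplitz F T) : IsWiener degree degree T :=
  hT.isToeplitz.isWiener fun i j => (hT.mem i j).2

theorem IsAnalyticToeplitz.isWiener_adjoint (hT : IsAnalyticToeplitz F T) :
    IsWiener degree degree (ContinuousLinearMap.adjoint T) :=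
  hT.isToeplitz.isWiener_adjoint fun i j => (hT.mem i j).2

theorem IsAnalyticToeplitz.restrictsToL1 (hT : IsAnalyticToeplitz F T) : RestrictsToL1 T :=
  hT.isWiener_adjoint.restrictsToL1 fiberCardLE_degree

theorem IsAnalyticToeplitz.restrictsToL1_adjoint (hT : IsAnalyticToeplitz F T) :
    RestrictsToL1 (ContinuousLinearMap.adjoint T) :=
  IsWiener.restrictsToL1 fiberCardLE_degree <| by
    rw [ContinuousLinearMap.adjoint_adjoint]
    exact hT.isWiener

end RestrictsToL1

theorem IsAnalyticToeplitz.sum_mul_columnFn [Fintype κ] (hT : IsAnalyticToeplitz F T)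
    (hΔ : ∀ x ∈ Δ, ∀ y ∈ Δ, x + y ∈ Δ) {x : L1 (κ × ↥Δ)} {y : L1 (ι × ↥Δ)}
    (hxy : toL2 y = T (toL2 x)) (i : ι) : ∑ j, F i j * columnFn j x = columnFn i y := by
  have hmem : APWmem k Δ (∑ j, F i j * columnFn j x) :=
    APWmem_sum _ fun j _ => APWmem_mul hΔ (hT.mem i j) (APWmem_columnFn j x)
  refine eq_of_bohrCoeff hmem.1.1 (columnFn_mem i y) fun lam => ?_
  rw [bohrCoeff_columnFn]
  by_cases hlam : lam ∈ Δ
  · rw [bohrCoeff_sum _ fun j => mul_mem (hT.mem i j).1.1 (columnFn_mem j x)]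
    have hcol := hasSum_mul_apply_stdBasis T (toL2 x) (i, ⟨lam, hlam⟩)
    rw [← hxy, toL2_apply, ← entryCoeff_coe] at hcol
    refine (hasSum_fintype _).unique (hcol.prod_fiberwise fun j => ?_)
    have hconv := hasSum_bohrCoeff_mul (columnFn_mem j x) (APWmem_columnFn j x).2
      (hT.mem i j).1.1 lam
    rw [mul_comm (columnFn j x), bohrCoeff_columnFn, ← hasSum_restrict (Δ := Δ) fun mu hmu => by
      rw [entryCoeff_of_notMem _ _ hmu, zero_mul]] at hconv
    refine hconv.congr_fun fun mu => ?_
    rw [entryCoeff_coe, hT.isToeplitz]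
    rfl
  · rw [entryCoeff_of_notMem _ _ hlam]
    exact not_not.1 fun h0 => hlam (hmem.1.2 h0)

/-- The matrix with the columns `v`. -/
def columnMatrix (v : κ → L1 (ι × ↥Δ)) : Matrix ι κ (APB k) :=
  Matrix.of fun i j => columnFn i (v j)

/-- The Toeplitz operator of the matrix with the columns `v`. -/
def columnToeplitz (v : κ → L1 (ι × ↥Δ)) : L2 (κ × ↥Δ) →L[ℂ] L2 (ι × ↥Δ) :=
  toeplitzOp Δ fun i j => entryCoeff (v j) i

variable [Finite ι]

theorem norm_columnToeplitz_le [Fintype κ] (v : κ → L1 (ι × ↥Δ)) :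
    ‖columnToeplitz v‖ ≤ ∑ j, ‖v j‖ := by
  have := Fintype.ofFinite ι
  refine (norm_toeplitzOp_le fun i j => (hasSum_norm_entryCoeff (v j) i).summable).trans_eq ?_
  rw [Finset.sum_comm]
  exact Finset.sum_congr rfl fun j _ => sum_tsum_norm_entryCoeff (v j)

variable [Finite κ]

theorem isAnalyticToeplitz_columnToeplitz (v : κ → L1 (ι × ↥Δ)) :
    IsAnalyticToeplitz (columnMatrix v) (columnToeplitz v) where
  mem i j := APWmem_columnFn i (v j)
  isToeplitz := by
    simp only [columnMatrix, Matrix.of_apply, bohrCoeff_columnFn]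
    exact isToeplitz_toeplitzOp fun i j => (hasSum_norm_entryCoeff (v j) i).summable

theorem columnToeplitz_sub (v w : κ → L1 (ι × ↥Δ)) :
    columnToeplitz (v - w) = columnToeplitz v - columnToeplitz w := by
  have hsummable (u : κ → L1 (ι × ↥Δ)) (i : ι) (j : κ) :=
    (hasSum_norm_entryCoeff (u j) i).summable
  have hsub : (fun i j => entryCoeff ((v - w) j) i) =
      (fun i j => entryCoeff (v j) i) - fun i j => entryCoeff (w j) i := by
    funext i j
    rw [Pi.sub_apply, Pi.sub_apply, Pi.sub_apply, sub_eq_add_neg, ← neg_one_smul ℂ,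
      entryCoeff_add, entryCoeff_smul, neg_one_smul, ← sub_eq_add_neg]
  refine (isToeplitz_toeplitzOp (hsummable (v - w))).unique ?_
  rw [hsub]
  exact (isToeplitz_toeplitzOp (hsummable v)).sub (isToeplitz_toeplitzOp (hsummable w))

theorem continuous_columnToeplitz :
    Continuous (columnToeplitz : (κ → L1 (ι × ↥Δ)) → _) := by
  have := Fintype.ofFinite κ
  refine LipschitzWith.continuous (K := Fintype.card κ) (.of_dist_le_mul fun v w => ?_)
  rw [dist_eq_norm, dist_eq_norm, ← columnToeplitz_sub, NNReal.coe_natCast, ← nsmul_eq_mul]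
  exact (norm_columnToeplitz_le _).trans
    (Finset.sum_le_card_nsmul _ _ _ fun j _ => norm_le_pi_norm (v - w) j)

end Columns

section SquaredNorm

variable {k : ℕ} {Δ : Set (Fin k → ℝ)} {ι κ : Type} [Fintype ι]

/-- The squared pointwise norm of the column of functions with the coordinates `x`. -/
def sqFn (x : L1 (ι × ↥Δ)) : APB k := ∑ i, star (columnFn i x) * columnFn i x

variable (x : L1 (ι × ↥Δ))

theorem sqFn_apply (s : Fin k → ℝ) :
    sqFn x s = ((∑ i, ‖columnFn i x s‖ ^ 2 : ℝ) : ℂ) := by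
  rw [sqFn, BoundedContinuousFunction.coe_sum, Finset.sum_apply, Complex.ofReal_sum]
  refine Finset.sum_congr rfl fun i _ => ?_
  rw [BoundedContinuousFunction.mul_apply, BoundedContinuousFunction.star_apply, Complex.star_def,
    Complex.conj_mul', Complex.ofReal_pow]

theorem star_sqFn : star (sqFn x) = sqFn x := by
  simp only [sqFn, star_sum, star_mul', star_star, mul_comm]

omit [Fintype ι] in
theorem star_columnFn_mul_mem (i : ι) : star (columnFn i x) * columnFn i x ∈ APalg k :=
  mul_mem (star_mem_APalg (columnFn_mem i x)) (columnFn_mem i x)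

theorem sqFn_mem : sqFn x ∈ APalg k := sum_mem fun i _ => star_columnFn_mul_mem x i

theorem bohrCoeff_sqFn (lam : Fin k → ℝ) :
    bohrCoeff k (sqFn x) lam = ∑ i, bohrCoeff k ⇑(star (columnFn i x) * columnFn i x) lam :=
  bohrCoeff_sum _ (star_columnFn_mul_mem x) lam

theorem bohrCoeff_sqFn_neg (lam : Fin k → ℝ) :
    bohrCoeff k (sqFn x) (-lam) = star (bohrCoeff k (sqFn x) lam) := by
  have hstar := bohrCoeff_star (sqFn_mem x) (-lam)
  rwa [star_sqFn, neg_neg] at hstar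

omit [Fintype ι] in
theorem hasSum_bohrCoeff_star_columnFn_mul (i : ι) (lam : Fin k → ℝ) :
    HasSum (fun mu : ↥Δ => star (x (i, mu)) * entryCoeff x i (lam + mu.1))
      (bohrCoeff k ⇑(star (columnFn i x) * columnFn i x) lam) := by
  have hsum := hasSum_bohrCoeff_star_mul (columnFn_mem i x) (APWmem_columnFn i x).2
    (columnFn_mem i x) lam
  rw [bohrCoeff_columnFn, ← hasSum_restrict (Δ := Δ) fun mu hmu => by
      rw [entryCoeff_of_notMem _ _ hmu, star_zero, zero_mul]] at hsum
  simpa only [entryCoeff_coe] using hsum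

theorem bohrCoeff_sqFn_coe (hΔ : ∀ x ∈ Δ, ∀ y ∈ Δ, x + y ∈ Δ) (lam : ↥Δ) :
    bohrCoeff k (sqFn x) lam.1 = inner ℂ (toL2 x) (backwardShift ι hΔ lam (toL2 x)) := by
  rw [bohrCoeff_sqFn]
  refine (hasSum_fintype _).unique
    ((lp.hasSum_inner (𝕜 := ℂ) (toL2 x) (backwardShift ι hΔ lam (toL2 x))).prod_fiberwise
      fun i => ?_)
  refine (hasSum_bohrCoeff_star_columnFn_mul x i lam.1).congr_fun fun mu => ?_
  rw [backwardShift_apply, add_comm lam.1, toL2_apply, toL2_apply, RCLike.inner_apply, mul_comm,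
    ← entryCoeff_coe x i ⟨mu.1 + lam.1, hΔ _ mu.2 _ lam.2⟩]
  rfl

theorem bohrCoeff_sqFn_of_notMem (hd : ∀ x ∈ Δ, ∀ y ∈ Δ, x - y ∈ Δ ∨ y - x ∈ Δ)
    {lam : Fin k → ℝ} (h : lam ∉ Δ) (h' : -lam ∉ Δ) : bohrCoeff k (sqFn x) lam = 0 := by
  rw [bohrCoeff_sqFn]
  refine Finset.sum_eq_zero fun i _ => (hasSum_bohrCoeff_star_columnFn_mul x i lam).unique ?_
  refine hasSum_zero.congr_fun fun mu => ?_
  rw [entryCoeff_of_notMem, mul_zero]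
  intro hmem
  rcases hd _ hmem _ mu.2 with hsub | hsub
  · exact h (by rwa [add_sub_cancel_right] at hsub)
  · exact h' (by rwa [sub_add_cancel_right] at hsub)

omit [Fintype ι] in
theorem backwardShift_zero (hΔ : ∀ x ∈ Δ, ∀ y ∈ Δ, x + y ∈ Δ) (h0 : (0 : Fin k → ℝ) ∈ Δ)
    (x : L2 (ι × ↥Δ)) : backwardShift ι hΔ ⟨0, h0⟩ x = x := by
  ext r
  rw [backwardShift_apply]
  exact congrArg x (Prod.ext rfl (Subtype.ext (add_zero r.2.1)))

theorem bohrCoeff_sqFn_zero (hΔ : ∀ x ∈ Δ, ∀ y ∈ Δ, x + y ∈ Δ) (h0 : (0 : Fin k → ℝ) ∈ Δ) :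
    bohrCoeff k (sqFn x) 0 = ((‖toL2 x‖ ^ 2 : ℝ) : ℂ) := by
  rw [bohrCoeff_sqFn_coe x hΔ ⟨0, h0⟩, backwardShift_zero, inner_self_eq_norm_sq_to_K,
    Complex.ofReal_pow]
  rfl

theorem norm_le_of_pointwise [Fintype κ] (hΔ : ∀ x ∈ Δ, ∀ y ∈ Δ, x + y ∈ Δ)
    (h0 : (0 : Fin k → ℝ) ∈ Δ) {x : L1 (ι × ↥Δ)} {y : L1 (κ × ↥Δ)}
    (h : ∀ s, ∑ i, ‖columnFn i x s‖ ^ 2 ≤ ∑ j, ‖columnFn j y s‖ ^ 2) : ‖toL2 x‖ ≤ ‖toL2 y‖ := by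
  have hx := tendsto_boxAvg_bohrCoeff (sqFn_mem x) 0
  have hy := tendsto_boxAvg_bohrCoeff (sqFn_mem y) 0
  rw [neg_zero, apExp_zero, one_mul, bohrCoeff_sqFn_zero x hΔ h0] at hx
  rw [neg_zero, apExp_zero, one_mul, bohrCoeff_sqFn_zero y hΔ h0] at hy
  have hlim := (Complex.continuous_re.tendsto _).comp (hy.sub hx)
  rw [← Complex.ofReal_sub, Complex.ofReal_re] at hlim
  refine le_of_sq_le_sq (sub_nonneg.1 (ge_of_tendsto hlim ?_)) (norm_nonneg _)
  filter_upwards [eventually_gt_atTop 0] with T hT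
  rw [Function.comp_apply, ← map_sub]
  refine le_re_boxAvg hT _ fun s => ?_
  rw [BoundedContinuousFunction.sub_apply, sqFn_apply, sqFn_apply, ← Complex.ofReal_sub,
    Complex.ofReal_re]
  exact sub_nonneg.2 (h s)

end SquaredNorm

section GramIdentity

/-- The nonnegative elements of a total order on the group generated by `Δ`. -/
structure IsCone {Γ : Type*} [AddCommGroup Γ] (Δ : Set Γ) : Prop where
  zero_mem : (0 : Γ) ∈ Δ
  add_mem : ∀ x ∈ Δ, ∀ y ∈ Δ, x + y ∈ Δ
  total : ∀ x ∈ Δ, ∀ y ∈ Δ, x - y ∈ Δ ∨ y - x ∈ Δ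
  antisymm : ∀ x ∈ Δ, -x ∈ Δ → x = 0

variable {k : ℕ} {Δ : Set (Fin k → ℝ)} {ι κ κ' : Type}

theorem eq_const_of_bohrCoeff {f : APB k} (hf : f ∈ APalg k)
    (h : ∀ lam, lam ≠ 0 → bohrCoeff k f lam = 0) (s : Fin k → ℝ) : f s = bohrCoeff k f 0 := by
  have hconst : f = bohrCoeff k f 0 • apExp k 0 := by
    refine eq_of_bohrCoeff hf ((APalg k).smul_mem (apExp_mem 0) _) fun lam => ?_
    rw [bohrCoeff_smul (apExp_mem 0), bohrCoeff_apExp]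
    by_cases hlam : lam = 0
    · rw [hlam, if_pos rfl, mul_one]
    · rw [h lam hlam, if_neg (Ne.symm hlam), mul_zero]
  conv_lhs => rw [hconst]
  rw [BoundedContinuousFunction.smul_apply, apExp_zero]
  exact mul_one _

theorem IsAnalyticToeplitz.backwardShift_adjoint {F : ι → κ → APB k}
    {T : L2 (κ × ↥Δ) →L[ℂ] L2 (ι × ↥Δ)} (hT : IsAnalyticToeplitz F T)
    (hΔ : ∀ x ∈ Δ, ∀ y ∈ Δ, x + y ∈ Δ) (lam : ↥Δ) (z : L2 (ι × ↥Δ)) :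
    backwardShift κ hΔ lam (ContinuousLinearMap.adjoint T z) =
      ContinuousLinearMap.adjoint T (backwardShift ι hΔ lam z) :=
  hT.isToeplitz.backwardShift_adjoint hΔ lam (fun i j => (hT.mem i j).1.2) z

theorem IsCone.backwardShift_eq_zero (hΔ : IsCone Δ) {e : L2 (ι × ↥Δ)}
    (he : ∀ q, degree q ≠ 0 → e q = 0) {lam : ↥Δ} (hlam : lam.1 ≠ 0) :
    backwardShift ι hΔ.add_mem lam e = 0 := by
  ext r
  rw [backwardShift_apply]
  refine he _ fun h => hlam (hΔ.antisymm _ lam.2 ?_)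
  rw [← eq_neg_of_add_eq_zero_left h]
  exact r.2.2

section

variable [Fintype κ] [Fintype κ'] {t : ℝ} {U : L1 (κ × ↥Δ)} {V : L1 (κ' × ↥Δ)}

/-- The function `|V|² - t |U|²`, for columns of functions `U` and `V`. -/
def gramFn (t : ℝ) (U : L1 (κ × ↥Δ)) (V : L1 (κ' × ↥Δ)) : APB k := sqFn V + (-t : ℂ) • sqFn U

theorem gramFn_apply (s : Fin k → ℝ) : gramFn t U V s =
    ((∑ i, ‖columnFn i V s‖ ^ 2 - t * ∑ i, ‖columnFn i U s‖ ^ 2 : ℝ) : ℂ) := by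
  rw [gramFn, BoundedContinuousFunction.add_apply, BoundedContinuousFunction.smul_apply,
    sqFn_apply, sqFn_apply, smul_eq_mul, neg_mul, ← sub_eq_add_neg, Complex.ofReal_sub,
    Complex.ofReal_mul]

theorem gramFn_mem : gramFn t U V ∈ APalg k :=
  add_mem (sqFn_mem V) ((APalg k).smul_mem (sqFn_mem U) _)

theorem bohrCoeff_gramFn (lam : Fin k → ℝ) : bohrCoeff k (gramFn t U V) lam =
    bohrCoeff k (sqFn V) lam - t * bohrCoeff k (sqFn U) lam := by
  rw [gramFn, bohrCoeff_add (sqFn_mem V) ((APalg k).smul_mem (sqFn_mem U) _),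
    bohrCoeff_smul (sqFn_mem U), neg_mul, ← sub_eq_add_neg]

theorem bohrCoeff_gramFn_neg (lam : Fin k → ℝ) :
    bohrCoeff k (gramFn t U V) (-lam) = star (bohrCoeff k (gramFn t U V) lam) := by
  rw [bohrCoeff_gramFn, bohrCoeff_gramFn, bohrCoeff_sqFn_neg, bohrCoeff_sqFn_neg, star_sub,
    star_mul', Complex.star_def, Complex.conj_ofReal]

theorem bohrCoeff_gramFn_of_notMem (hd : ∀ x ∈ Δ, ∀ y ∈ Δ, x - y ∈ Δ ∨ y - x ∈ Δ)
    {lam : Fin k → ℝ} (h : lam ∉ Δ) (h' : -lam ∉ Δ) : bohrCoeff k (gramFn t U V) lam = 0 := by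
  rw [bohrCoeff_gramFn, bohrCoeff_sqFn_of_notMem V hd h h', bohrCoeff_sqFn_of_notMem U hd h h',
    mul_zero, sub_zero]

variable {A : ι → κ → APB k} {B : ι → κ' → APB k}
  {TA : L2 (κ × ↥Δ) →L[ℂ] L2 (ι × ↥Δ)} {TB : L2 (κ' × ↥Δ) →L[ℂ] L2 (ι × ↥Δ)}
  {y : L2 (ι × ↥Δ)} {e : L2 (κ' × ↥Δ)}

theorem bohrCoeff_gramFn_coe (hA : IsAnalyticToeplitz A TA) (hB : IsAnalyticToeplitz B TB)
    (hΔ : ∀ x ∈ Δ, ∀ y ∈ Δ, x + y ∈ Δ) (hU : toL2 U = ContinuousLinearMap.adjoint TA y)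
    (hV : toL2 V = e + (t : ℂ) • ContinuousLinearMap.adjoint TB y)
    (hUV : TA (toL2 U) = TB (toL2 V)) (lam : ↥Δ) :
    bohrCoeff k (gramFn t U V) lam.1 = inner ℂ (toL2 V) (backwardShift κ' hΔ lam e) := by
  have hshiftV : backwardShift κ' hΔ lam (toL2 V) = backwardShift κ' hΔ lam e +
      (t : ℂ) • ContinuousLinearMap.adjoint TB (backwardShift ι hΔ lam y) := by
    rw [hV, map_add, map_smul, hB.backwardShift_adjoint hΔ]
  have hshiftU : backwardShift κ hΔ lam (toL2 U) =
      ContinuousLinearMap.adjoint TA (backwardShift ι hΔ lam y) := by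
    rw [hU, hA.backwardShift_adjoint hΔ]
  rw [bohrCoeff_gramFn, bohrCoeff_sqFn_coe V hΔ, bohrCoeff_sqFn_coe U hΔ, hshiftV, hshiftU,
    inner_add_right, inner_smul_right, ContinuousLinearMap.adjoint_inner_right,
    ContinuousLinearMap.adjoint_inner_right, hUV, add_sub_cancel_right]

-- All nonzero coefficients of `|V|² - t |U|²` vanish: those in `Δ` because `e` is constant and
-- backward shifts annihilate it, and those in `-Δ` by conjugation.
theorem gram_identity (hA : IsAnalyticToeplitz A TA) (hB : IsAnalyticToeplitz B TB)
    (hΔ : IsCone Δ) (he : ∀ q, degree q ≠ 0 → e q = 0)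
    (hU : toL2 U = ContinuousLinearMap.adjoint TA y)
    (hV : toL2 V = e + (t : ℂ) • ContinuousLinearMap.adjoint TB y)
    (hUV : TA (toL2 U) = TB (toL2 V)) (s : Fin k → ℝ) :
    ∑ i, ‖columnFn i V s‖ ^ 2 - t * ∑ i, ‖columnFn i U s‖ ^ 2 = (inner ℂ (toL2 V) e).re := by
  have hcoe := bohrCoeff_gramFn_coe hA hB hΔ.add_mem hU hV hUV
  have hpos (lam : Fin k → ℝ) (h : lam ∈ Δ) (h0 : lam ≠ 0) :
      bohrCoeff k (gramFn t U V) lam = 0 := by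
    rw [hcoe ⟨lam, h⟩, hΔ.backwardShift_eq_zero he h0, inner_zero_right]
  have hconst := eq_const_of_bohrCoeff (gramFn_mem (t := t) (U := U) (V := V)) (fun lam h0 => by
    by_cases h : lam ∈ Δ
    · exact hpos lam h h0
    by_cases h' : -lam ∈ Δ
    · rw [← neg_neg lam, bohrCoeff_gramFn_neg, hpos _ h' (neg_ne_zero.2 h0), star_zero]
    · exact bohrCoeff_gramFn_of_notMem hΔ.total h h') s
  rw [hcoe ⟨0, hΔ.zero_mem⟩, backwardShift_zero, gramFn_apply] at hconst
  rw [← hconst, Complex.ofReal_re]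

end

end GramIdentity

section Defect

variable {E F G : Type*} [NormedAddCommGroup E] [InnerProductSpace ℂ E] [CompleteSpace E]
  [NormedAddCommGroup F] [InnerProductSpace ℂ F] [CompleteSpace F]
  [NormedAddCommGroup G] [InnerProductSpace ℂ G] [CompleteSpace G]

/-- The defect operator `T_A T_A* - t T_B T_B*`. -/
def defect (TA : E →L[ℂ] G) (TB : F →L[ℂ] G) (t : ℝ) : G →L[ℂ] G :=
  TA.comp (ContinuousLinearMap.adjoint TA) - (t : ℂ) • TB.comp (ContinuousLinearMap.adjoint TB)

theorem antitone_defect (TA : E →L[ℂ] G) (TB : F →L[ℂ] G) : Antitone (defect TA TB) := by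
  intro t τ ht
  have hsub : defect TA TB t - defect TA TB τ =
      ((τ - t : ℝ) : ℂ) • TB.comp (ContinuousLinearMap.adjoint TB) := by
    rw [defect, defect, Complex.ofReal_sub, sub_smul]
    abel
  rw [ContinuousLinearMap.le_def, hsub]
  exact (ContinuousLinearMap.isPositive_self_comp_adjoint TB).smul_of_nonneg
    (by exact_mod_cast sub_nonneg.2 ht)

end Defect

section PositiveDefect

variable {k : ℕ} {Δ : Set (Fin k → ℝ)} {ι κ κ' : Type}

/-- The setting of the construction: `T_A` and `T_B` are the Toeplitz operators of matrices over
the Wiener algebra of a cone, and the defect operator with the parameter `τ` is positive and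
invertible. -/
structure PositiveDefect (A : ι → κ → APB k) (B : ι → κ' → APB k)
    (TA : L2 (κ × ↥Δ) →L[ℂ] L2 (ι × ↥Δ)) (TB : L2 (κ' × ↥Δ) →L[ℂ] L2 (ι × ↥Δ))
    (τ : ℝ) : Prop where
  cone : IsCone Δ
  analyticA : IsAnalyticToeplitz A TA
  analyticB : IsAnalyticToeplitz B TB
  pos : (defect TA TB τ).IsPositive
  unit : IsUnit (defect TA TB τ)

variable {A : ι → κ → APB k} {B : ι → κ' → APB k}
  {TA : L2 (κ × ↥Δ) →L[ℂ] L2 (ι × ↥Δ)} {TB : L2 (κ' × ↥Δ) →L[ℂ] L2 (ι × ↥Δ)} {τ t : ℝ}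

namespace PositiveDefect

theorem isPositive (h : PositiveDefect A B TA TB τ) (ht : t ≤ τ) :
    (defect TA TB t).IsPositive :=
  (ContinuousLinearMap.nonneg_iff_isPositive _).1 <|
    ((ContinuousLinearMap.nonneg_iff_isPositive _).2 h.pos).trans (antitone_defect TA TB ht)

theorem isUnit (h : PositiveDefect A B TA TB τ) (ht : t ≤ τ) : IsUnit (defect TA TB t) :=
  CStarAlgebra.isUnit_of_le _ (antitone_defect TA TB ht)
    ⟨(ContinuousLinearMap.nonneg_iff_isPositive _).2 h.pos, h.unit⟩

variable [Finite ι] [Finite κ] [Finite κ']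

theorem restrictsToL1_inverse (h : PositiveDefect A B TA TB τ) (ht : t ≤ τ) :
    RestrictsToL1 (Ring.inverse (defect TA TB t)) := by
  refine IsWiener.restrictsToL1_inverse fiberCardLE_degree ?_
    (Ring.mul_inverse_cancel _ (h.isUnit ht)) (Ring.inverse_mul_cancel _ (h.isUnit ht))
  rw [(h.isPositive ht).isSelfAdjoint.adjoint_eq, defect, sub_eq_add_neg, ← neg_smul]
  exact (h.analyticA.isWiener.comp h.analyticA.isWiener_adjoint).add
    ((h.analyticB.isWiener.comp h.analyticB.isWiener_adjoint).smul _)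

end PositiveDefect

end PositiveDefect

section Restriction

universe u

variable {I I' : Type u} {T : L2 I →L[ℂ] L2 I'}

/-- The operator induced on `ℓ¹`. -/
def RestrictsToL1.restrict (h : RestrictsToL1 T) : L1 I →L[ℂ] L1 I' := h.choose

theorem RestrictsToL1.toL2_restrict (h : RestrictsToL1 T) (x : L1 I) :
    toL2 (h.restrict x) = T (toL2 x) := h.choose_spec x

end Restriction

section Fraction

variable {k : ℕ} {Δ : Set (Fin k → ℝ)} {ι κ κ' : Type} [Finite ι]
  {A : ι → κ → APB k} {B : ι → κ' → APB k}
  {TA : L2 (κ × ↥Δ) →L[ℂ] L2 (ι × ↥Δ)} {TB : L2 (κ' × ↥Δ) →L[ℂ] L2 (ι × ↥Δ)} {τ t : ℝ}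

namespace PositiveDefect

section Operators

variable [Finite κ] [Finite κ']

/-- The defect operator on `ℓ¹`. -/
def l1Defect (h : PositiveDefect A B TA TB τ) (t : ℝ) : L1 (ι × ↥Δ) →L[ℂ] L1 (ι × ↥Δ) :=
  h.analyticA.restrictsToL1.restrict.comp h.analyticA.restrictsToL1_adjoint.restrict -
    (t : ℂ) • h.analyticB.restrictsToL1.restrict.comp h.analyticB.restrictsToL1_adjoint.restrict

theorem toL2_l1Defect (h : PositiveDefect A B TA TB τ) (t : ℝ) (x : L1 (ι × ↥Δ)) :
    toL2 (h.l1Defect t x) = defect TA TB t (toL2 x) := by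
  simp only [l1Defect, defect, _root_.sub_apply, _root_.smul_apply,
    ContinuousLinearMap.comp_apply, map_sub, map_smul, RestrictsToL1.toL2_restrict]

theorem isUnit_l1Defect (h : PositiveDefect A B TA TB τ) (ht : t ≤ τ) :
    IsUnit (h.l1Defect t) := by
  have hinv := (h.restrictsToL1_inverse ht).toL2_restrict
  refine isUnit_iff_exists.2 ⟨(h.restrictsToL1_inverse ht).restrict, ?_, ?_⟩
  · ext1 x
    refine toL2_injective ?_
    rw [mul_apply_eq_comp, toL2_l1Defect, hinv, ← mul_apply_eq_comp,
      Ring.mul_inverse_cancel _ (h.isUnit ht)]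
    rfl
  · ext1 x
    refine toL2_injective ?_
    rw [mul_apply_eq_comp, hinv, toL2_l1Defect, ← mul_apply_eq_comp,
      Ring.inverse_mul_cancel _ (h.isUnit ht)]
    rfl

/-- The operator `e ↦ (T_A T_A* - t T_B T_B*)⁻¹ T_B e` on `ℓ¹`. -/
def potential (h : PositiveDefect A B TA TB τ) (t : ℝ) : L1 (κ' × ↥Δ) →L[ℂ] L1 (ι × ↥Δ) :=
  (Ring.inverse (h.l1Defect t)).comp h.analyticB.restrictsToL1.restrict

/-- The operator sending the constant unit columns to the columns of the numerator `U` in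
`F = U V⁻¹`. -/
def numer (h : PositiveDefect A B TA TB τ) (t : ℝ) : L1 (κ' × ↥Δ) →L[ℂ] L1 (κ × ↥Δ) :=
  h.analyticA.restrictsToL1_adjoint.restrict.comp (h.potential t)

/-- The operator sending the constant unit columns to the columns of the denominator `V` in
`F = U V⁻¹`. -/
def denom (h : PositiveDefect A B TA TB τ) (t : ℝ) : L1 (κ' × ↥Δ) →L[ℂ] L1 (κ' × ↥Δ) :=
  .id ℂ _ + (t : ℂ) • h.analyticB.restrictsToL1_adjoint.restrict.comp (h.potential t)

theorem continuous_denom (h : PositiveDefect A B TA TB τ) :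
    Continuous fun t : Set.Iic τ => h.denom t := by
  have hdefect : Continuous fun t : Set.Iic τ => h.l1Defect t := by
    unfold l1Defect
    fun_prop
  have hinverse : Continuous fun t : Set.Iic τ => Ring.inverse (h.l1Defect t) := by
    refine continuous_iff_continuousAt.2 fun t => ?_
    obtain ⟨u, hu⟩ := h.isUnit_l1Defect t.2
    exact ContinuousAt.comp (g := Ring.inverse)
      (hu ▸ NormedRing.inverse_continuousAt u) hdefect.continuousAt
  unfold denom potential
  fun_prop

theorem denom_zero (h : PositiveDefect A B TA TB τ) : h.denom 0 = .id ℂ _ := by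
  rw [denom, Complex.ofReal_zero, zero_smul, add_zero]

theorem defect_potential (h : PositiveDefect A B TA TB τ) (ht : t ≤ τ) (e : L1 (κ' × ↥Δ)) :
    defect TA TB t (toL2 (h.potential t e)) = TB (toL2 e) := by
  rw [← h.toL2_l1Defect, ← h.analyticB.restrictsToL1.toL2_restrict, potential,
    ContinuousLinearMap.comp_apply, ← mul_apply_eq_comp,
    Ring.mul_inverse_cancel _ (h.isUnit_l1Defect ht)]
  rfl

theorem toL2_numer (h : PositiveDefect A B TA TB τ) (t : ℝ) (e : L1 (κ' × ↥Δ)) :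
    toL2 (h.numer t e) = ContinuousLinearMap.adjoint TA (toL2 (h.potential t e)) :=
  h.analyticA.restrictsToL1_adjoint.toL2_restrict _

theorem toL2_denom (h : PositiveDefect A B TA TB τ) (t : ℝ) (e : L1 (κ' × ↥Δ)) :
    toL2 (h.denom t e) =
      toL2 e + (t : ℂ) • ContinuousLinearMap.adjoint TB (toL2 (h.potential t e)) := by
  rw [← h.analyticB.restrictsToL1_adjoint.toL2_restrict, ← map_smul, ← map_add]
  rfl

theorem apply_numer (h : PositiveDefect A B TA TB τ) (ht : t ≤ τ) (e : L1 (κ' × ↥Δ)) :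
    TA (toL2 (h.numer t e)) = TB (toL2 (h.denom t e)) := by
  rw [toL2_numer, toL2_denom, map_add, map_smul, ← h.defect_potential ht e]
  exact (sub_add_cancel _ _).symm

end Operators

theorem norm_sq_add_le [Fintype κ] [Fintype κ'] (h : PositiveDefect A B TA TB τ)
    (ht : t ≤ τ) (ht0 : 0 ≤ t) {e : L1 (κ' × ↥Δ)} (he : ∀ q, degree q ≠ 0 → e q = 0)
    (s : Fin k → ℝ) :
    ‖toL2 e‖ ^ 2 + t * ∑ i, ‖columnFn i (h.numer t e) s‖ ^ 2 ≤
      ∑ i, ‖columnFn i (h.denom t e) s‖ ^ 2 := by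
  have hgram := gram_identity h.analyticA h.analyticB h.cone he (h.toL2_numer t e)
    (h.toL2_denom t e) (h.apply_numer ht e) s
  have hinner : (inner ℂ (toL2 (h.denom t e)) (toL2 e)).re = ‖toL2 e‖ ^ 2 +
      t * (inner ℂ (toL2 (h.potential t e)) (defect TA TB t (toL2 (h.potential t e)))).re := by
    rw [h.defect_potential ht, toL2_denom, inner_add_left, inner_smul_left,
      ContinuousLinearMap.adjoint_inner_left, Complex.add_re, Complex.conj_ofReal,
      Complex.re_ofReal_mul]
    congr 1
    exact inner_self_eq_norm_sq (𝕜 := ℂ) _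
  have hpos : 0 ≤
      (inner ℂ (toL2 (h.potential t e)) (defect TA TB t (toL2 (h.potential t e)))).re :=
    (h.isPositive ht).re_inner_nonneg_right _
  linarith [mul_nonneg ht0 hpos]

end PositiveDefect

end Fraction

section ConstantColumns

variable {k : ℕ} {Δ : Set (Fin k → ℝ)} {ι κ : Type} (h0 : (0 : Fin k → ℝ) ∈ Δ)

/-- The constant column whose only nonzero entry is `1`, at `j`. -/
def constBasis (j : κ) : L1 (κ × ↥Δ) := stdBasis 1 (j, ⟨0, h0⟩)

theorem entryCoeff_constBasis [DecidableEq κ] (i j : κ) (lam : Fin k → ℝ) :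
    entryCoeff (constBasis h0 j) i lam = if i = j ∧ lam = 0 then 1 else 0 := by
  split_ifs with h
  · obtain ⟨rfl, rfl⟩ := h
    exact (entryCoeff_coe _ i ⟨0, h0⟩).trans (stdBasis_self 1 _)
  · by_cases hmem : lam ∈ Δ
    · refine (entryCoeff_coe _ i ⟨lam, hmem⟩).trans (stdBasis_of_ne 1 fun heq => h ?_)
      exact ⟨congrArg Prod.fst heq, congrArg (fun q => q.2.1) heq⟩
    · exact entryCoeff_of_notMem _ i hmem

theorem columnFn_constBasis [DecidableEq κ] (i j : κ) :
    columnFn i (constBasis h0 j) = if i = j then 1 else 0 := by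
  have hsmul : columnFn i (constBasis h0 j) = (if i = j then (1 : ℂ) else 0) • apExp k 0 := by
    refine eq_of_bohrCoeff (columnFn_mem i _) ((APalg k).smul_mem (apExp_mem 0) _) fun lam => ?_
    rw [bohrCoeff_columnFn, entryCoeff_constBasis, bohrCoeff_smul (apExp_mem 0), bohrCoeff_apExp,
      ite_and, ite_mul, one_mul, zero_mul]
    simp only [eq_comm]
  rw [hsmul, apExp_zero, ite_smul, one_smul, zero_smul]

theorem columnToeplitz_constBasis [Finite κ] :
    columnToeplitz (constBasis h0 : κ → L1 (κ × ↥Δ)) = 1 := by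
  classical
  refine clm_ext_stdBasis fun q r => ?_
  refine (isToeplitz_toeplitzOp (fun i j =>
    (hasSum_norm_entryCoeff (constBasis h0 j) i).summable) q r).trans ?_
  rw [entryCoeff_constBasis, one_apply_eq_self]
  split_ifs with h
  · obtain rfl : r = q := Prod.ext h.1 (Subtype.ext (sub_eq_zero.1 h.2))
    exact (stdBasis_self 2 r).symm
  · refine (stdBasis_of_ne 2 ?_).symm
    rintro rfl
    exact h ⟨rfl, sub_self _⟩

variable [Fintype κ]

/-- The constant column with the entries `v`. -/
def constColumn (v : κ → ℂ) : L1 (κ × ↥Δ) := ∑ j, v j • constBasis h0 j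

theorem constColumn_apply (v : κ → ℂ) (q : κ × ↥Δ) :
    constColumn h0 v q = ∑ j, v j * constBasis h0 j q := by
  rw [constColumn, lp.coeFn_sum, Finset.sum_apply]
  rfl

theorem constColumn_of_degree_ne (v : κ → ℂ) (q : κ × ↥Δ) (hq : degree q ≠ 0) :
    constColumn h0 v q = 0 := by
  rw [constColumn_apply]
  refine Finset.sum_eq_zero fun j _ => ?_
  rw [constBasis, stdBasis_of_ne, mul_zero]
  rintro rfl
  exact hq rfl

theorem constColumn_zero (v : κ → ℂ) (j : κ) : constColumn h0 v (j, ⟨0, h0⟩) = v j := by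
  rw [constColumn_apply, Finset.sum_eq_single j, constBasis, stdBasis_self, mul_one]
  · intro i _ hi
    rw [constBasis, stdBasis_of_ne, mul_zero]
    exact fun h => hi (congrArg Prod.fst h).symm
  · exact fun h => absurd (Finset.mem_univ j) h

theorem sum_norm_sq_le_norm_constColumn (v : κ → ℂ) :
    ∑ j, ‖v j‖ ^ 2 ≤ ‖toL2 (constColumn h0 v)‖ ^ 2 := by
  have h := sum_norm_sq_le (toL2 (constColumn h0 v))
    (Finset.univ.map ⟨fun j => (j, ⟨0, h0⟩), fun _ _ h => congrArg Prod.fst h⟩)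
  rw [Finset.sum_map] at h
  refine (Finset.sum_congr rfl fun j _ => ?_).trans_le h
  exact congrArg (fun z => ‖z‖ ^ 2) (constColumn_zero h0 v j).symm

theorem columnFn_map_constColumn (T : L1 (κ × ↥Δ) →L[ℂ] L1 (ι × ↥Δ)) (v : κ → ℂ) (i : ι)
    (s : Fin k → ℝ) : columnFn i (T (constColumn h0 v)) s =
      ∑ j, columnFn i (T (constBasis h0 j)) s * v j := by
  simp only [constColumn, map_sum, map_smul, BoundedContinuousFunction.coe_sum, Finset.sum_apply,
    BoundedContinuousFunction.smul_apply, smul_eq_mul, mul_comm]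

end ConstantColumns

section Density

universe u

variable {I : Type u}

theorem toL2_stdBasis (q : I) : toL2 (stdBasis 1 q) = stdBasis 2 q := by
  ext r
  rw [toL2_apply]
  by_cases h : r = q
  · rw [h, stdBasis_self, stdBasis_self]
  · rw [stdBasis_of_ne 1 h, stdBasis_of_ne 2 h]

theorem denseRange_toL2 : DenseRange (toL2 (I := I)) := fun x =>
  mem_closure_of_tendsto (hasSum_smul_stdBasis x) <| .of_forall fun s =>
    ⟨∑ q ∈ s, x q • stdBasis 1 q, by simp only [map_sum, map_smul, toL2_stdBasis]⟩

end Density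

section MethodOfContinuity

variable {E : Type*} [NormedAddCommGroup E] [NormedSpace ℂ E] [CompleteSpace E]

theorem isUnit_of_norm_sub_lt {X Y : E →L[ℂ] E} (hX : IsUnit X) (hb : ∀ x, ‖x‖ ≤ ‖X x‖)
    (hXY : ‖X - Y‖ < 1) : IsUnit Y := by
  have hinv : ‖Ring.inverse X‖ ≤ 1 := by
    refine ContinuousLinearMap.opNorm_le_bound _ zero_le_one fun x => ?_
    have hx := congrArg (fun T => T x) (Ring.mul_inverse_cancel X hX)
    rw [one_mul]
    exact (hb _).trans_eq (congrArg norm hx)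
  have hlt : ‖Ring.inverse X * (X - Y)‖ < 1 :=
    (norm_mul_le _ _).trans_lt ((mul_le_of_le_one_left (norm_nonneg _) hinv).trans_lt hXY)
  have hY : Y = X * (1 - Ring.inverse X * (X - Y)) := by
    rw [mul_sub, mul_one, ← mul_assoc, Ring.mul_inverse_cancel X hX, one_mul, sub_sub_cancel]
  rw [hY]
  exact hX.mul (isUnit_one_sub_of_norm_lt_one hlt)

theorem isUnit_of_continuous {J : Type*} [TopologicalSpace J] [PreconnectedSpace J]
    {X : J → E →L[ℂ] E} (hX : Continuous X) (hb : ∀ t x, ‖x‖ ≤ ‖X t x‖) {a : J}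
    (ha : IsUnit (X a)) (b : J) : IsUnit (X b) := by
  have hloc : IsLocallyConstant fun t => IsUnit (X t) := by
    refine (IsLocallyConstant.iff_eventually_eq _).2 fun s => ?_
    filter_upwards [hX.continuousAt.eventually (Metric.ball_mem_nhds (X s) one_pos)] with t ht
    rw [dist_eq_norm] at ht
    exact propext ⟨fun hu => isUnit_of_norm_sub_lt hu (hb t) ht,
      fun hu => isUnit_of_norm_sub_lt hu (hb s) (by rwa [norm_sub_rev])⟩
  exact (hloc.apply_eq_of_preconnectedSpace a b).mp ha

end MethodOfContinuity

section Denominator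

variable {k : ℕ} {Δ : Set (Fin k → ℝ)} {ι κ κ' : Type} [Finite ι]
  {A : ι → κ → APB k} {B : ι → κ' → APB k}
  {TA : L2 (κ × ↥Δ) →L[ℂ] L2 (ι × ↥Δ)} {TB : L2 (κ' × ↥Δ) →L[ℂ] L2 (ι × ↥Δ)} {τ t : ℝ}

namespace PositiveDefect

/-- The columns of the numerator `U` in `F = U V⁻¹`. -/
def numerColumn [Finite κ] [Finite κ'] (h : PositiveDefect A B TA TB τ) (t : ℝ) (j : κ') :
    L1 (κ × ↥Δ) :=
  h.numer t (constBasis h.cone.zero_mem j)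

/-- The columns of the denominator `V` in `F = U V⁻¹`. -/
def denomColumn [Finite κ] [Finite κ'] (h : PositiveDefect A B TA TB τ) (t : ℝ) (j : κ') :
    L1 (κ' × ↥Δ) :=
  h.denom t (constBasis h.cone.zero_mem j)

theorem sum_norm_sq_add_le [Fintype κ] [Fintype κ'] (h : PositiveDefect A B TA TB τ)
    (ht : t ≤ τ) (ht0 : 0 ≤ t) (v : κ' → ℂ) (s : Fin k → ℝ) :
    ∑ j, ‖v j‖ ^ 2 + t * ∑ i, ‖∑ j, columnFn i (h.numerColumn t j) s * v j‖ ^ 2 ≤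
      ∑ i, ‖∑ j, columnFn i (h.denomColumn t j) s * v j‖ ^ 2 := by
  have hle := h.norm_sq_add_le ht ht0 (constColumn_of_degree_ne h.cone.zero_mem v) s
  simp only [columnFn_map_constColumn] at hle
  exact (add_le_add_left (sum_norm_sq_le_norm_constColumn h.cone.zero_mem v) _).trans hle

variable [Finite κ] [Finite κ']

theorem norm_le_norm_columnToeplitz (h : PositiveDefect A B TA TB τ) (ht : t ≤ τ) (ht0 : 0 ≤ t)
    (x : L2 (κ' × ↥Δ)) : ‖x‖ ≤ ‖columnToeplitz (h.denomColumn t) x‖ := by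
  have := Fintype.ofFinite κ
  have := Fintype.ofFinite κ'
  have hV := isAnalyticToeplitz_columnToeplitz (h.denomColumn t)
  have hL1 (x : L1 (κ' × ↥Δ)) : ‖toL2 x‖ ≤ ‖columnToeplitz (h.denomColumn t) (toL2 x)‖ := by
    rw [← hV.restrictsToL1.toL2_restrict]
    refine norm_le_of_pointwise h.cone.add_mem h.cone.zero_mem fun s => ?_
    simp only [← hV.sum_mul_columnFn h.cone.add_mem (hV.restrictsToL1.toL2_restrict x),
      BoundedContinuousFunction.coe_sum, Finset.sum_apply]
    refine le_trans (le_add_of_nonneg_right ?_)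
      (h.sum_norm_sq_add_le ht ht0 (fun j => columnFn j x s) s)
    positivity
  have hclosed : IsClosed {x | ‖x‖ ≤ ‖columnToeplitz (h.denomColumn t) x‖} :=
    isClosed_le continuous_norm (columnToeplitz (h.denomColumn t)).continuous.norm
  exact (hclosed.closure_subset_iff.2 (Set.range_subset_iff.2 hL1)) (denseRange_toL2 x)

theorem isUnit_columnToeplitz_denom (h : PositiveDefect A B TA TB τ) (hτ : 0 ≤ τ) :
    IsUnit (columnToeplitz (h.denomColumn τ)) := by
  have : PreconnectedSpace (Set.Icc 0 τ) :=
    isPreconnected_iff_preconnectedSpace.1 isPreconnected_Icc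
  have hdenom : Continuous fun t : Set.Icc 0 τ => h.denom t :=
    h.continuous_denom.comp (continuous_inclusion fun _ ht => ht.2)
  have hcolumn : Continuous fun t : Set.Icc 0 τ => h.denomColumn t :=
    continuous_pi fun j => hdenom.clm_apply continuous_const
  have hzero : h.denomColumn 0 = constBasis h.cone.zero_mem :=
    funext fun j => by rw [denomColumn, denom_zero]; rfl
  exact isUnit_of_continuous (continuous_columnToeplitz.comp hcolumn)
    (fun t => h.norm_le_norm_columnToeplitz t.2.2 t.2.1) (a := ⟨0, le_rfl, hτ⟩)
    (by simp only [Function.comp_apply, hzero, columnToeplitz_constBasis, isUnit_one])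
    ⟨τ, hτ, le_rfl⟩

end PositiveDefect

end Denominator

section Solution

variable {k : ℕ} {Δ : Set (Fin k → ℝ)} {ι κ κ' : Type} [Fintype κ']

theorem exists_columnMatrix_mul_eq_one [DecidableEq κ'] (hΔ : ∀ x ∈ Δ, ∀ y ∈ Δ, x + y ∈ Δ)
    (h0 : (0 : Fin k → ℝ) ∈ Δ) {v : κ' → L1 (κ' × ↥Δ)} (hv : IsUnit (columnToeplitz v)) :
    ∃ z : κ' → L1 (κ' × ↥Δ), columnMatrix v * columnMatrix z = 1 := by
  have hV := isAnalyticToeplitz_columnToeplitz v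
  have hinv : RestrictsToL1 (Ring.inverse (columnToeplitz v)) :=
    hV.isWiener_adjoint.restrictsToL1_inverse fiberCardLE_degree
      (Ring.mul_inverse_cancel _ hv) (Ring.inverse_mul_cancel _ hv)
  refine ⟨fun j => hinv.restrict (constBasis h0 j), Matrix.ext fun i j => ?_⟩
  refine (hV.sum_mul_columnFn hΔ ?_ i).trans (columnFn_constBasis h0 i j)
  rw [hinv.toL2_restrict, ← mul_apply_eq_comp, Ring.mul_inverse_cancel _ hv]
  rfl

theorem sum_mul_apply_mul [Fintype κ] (F : Matrix ι κ' (APB k)) (G : Matrix κ' κ (APB k))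
    (i : ι) (v : κ → ℂ) (s : Fin k → ℝ) :
    ∑ j, (F * G) i j s * v j = ∑ l, F i l s * ∑ j, G l j s * v j := by
  simp only [Matrix.mul_apply, BoundedContinuousFunction.coe_sum, Finset.sum_apply,
    BoundedContinuousFunction.mul_apply, Finset.sum_mul, Finset.mul_sum, mul_assoc]
  exact Finset.sum_comm

theorem sum_one_apply_mul [DecidableEq κ'] (i : κ') (v : κ' → ℂ) (s : Fin k → ℝ) :
    ∑ j, (1 : Matrix κ' κ' (APB k)) i j s * v j = v i := by
  rw [Finset.sum_eq_single i, Matrix.one_apply_eq]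
  · exact one_mul _
  · intro j _ hj
    rw [Matrix.one_apply_ne hj.symm]
    exact zero_mul _
  · exact fun hi => absurd (Finset.mem_univ i) hi

namespace PositiveDefect

variable [Finite ι] [Fintype κ] {A : Matrix ι κ (APB k)} {B : Matrix ι κ' (APB k)}
  {TA : L2 (κ × ↥Δ) →L[ℂ] L2 (ι × ↥Δ)} {TB : L2 (κ' × ↥Δ) →L[ℂ] L2 (ι × ↥Δ)} {τ t : ℝ}

theorem mul_columnMatrix_numerColumn (h : PositiveDefect A B TA TB τ) (ht : t ≤ τ) :
    A * columnMatrix (h.numerColumn t) = B * columnMatrix (h.denomColumn t) := by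
  ext1 i j
  have hA := h.analyticA.restrictsToL1.toL2_restrict (h.numerColumn t j)
  exact (h.analyticA.sum_mul_columnFn h.cone.add_mem hA i).trans
    (h.analyticB.sum_mul_columnFn h.cone.add_mem (hA.trans (h.apply_numer ht _)) i).symm

theorem exists_solution (h : PositiveDefect A B TA TB τ) (hτ : 0 ≤ τ) :
    ∃ F : Matrix κ κ' (APB k), (∀ i j, APWmem k Δ (F i j)) ∧
      (∀ (s : Fin k → ℝ) (v : κ' → ℂ),
        τ * ∑ i, ‖∑ j, F i j s * v j‖ ^ 2 ≤ ∑ j, ‖v j‖ ^ 2) ∧ A * F = B := by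
  classical
  obtain ⟨z, hz⟩ := exists_columnMatrix_mul_eq_one h.cone.add_mem h.cone.zero_mem
    (h.isUnit_columnToeplitz_denom hτ)
  refine ⟨columnMatrix (h.numerColumn τ) * columnMatrix z, fun i j => ?_, fun s v => ?_, ?_⟩
  · exact APWmem_sum _ fun l _ =>
      APWmem_mul h.cone.add_mem (APWmem_columnFn i _) (APWmem_columnFn l _)
  · have hden (i : κ') :
        ∑ l, columnFn i (h.denomColumn τ l) s * ∑ j, columnMatrix z l j s * v j = v i := by
      rw [← sum_one_apply_mul i v s, ← hz]
      exact (sum_mul_apply_mul (columnMatrix (h.denomColumn τ)) (columnMatrix z) i v s).symm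
    have hle := h.sum_norm_sq_add_le le_rfl hτ (fun l => ∑ j, columnMatrix z l j s * v j) s
    simp only [hden] at hle
    simp only [sum_mul_apply_mul]
    exact (le_add_of_nonneg_left (Finset.sum_nonneg fun _ _ => sq_nonneg _)).trans hle
  · rw [← Matrix.mul_assoc, h.mul_columnMatrix_numerColumn le_rfl, Matrix.mul_assoc, hz,
      Matrix.mul_one]

end PositiveDefect

end Solution

section Statement

variable {k m n : ℕ} {S Λ : Set (Fin k → ℝ)}

theorem isCone_inter (hS : IsHalfspace k S) (Λ : AddSubgroup (Fin k → ℝ)) :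
    IsCone (S ∩ ↑Λ) where
  zero_mem := ⟨(hS.inter.symm ▸ Set.mem_singleton 0 : (0 : Fin k → ℝ) ∈ S ∩ -S).1, Λ.zero_mem⟩
  add_mem x hx y hy := ⟨hS.add_mem x hx.1 y hy.1, Λ.add_mem hx.2 hy.2⟩
  total x hx y hy := by
    rcases (hS.union.symm ▸ Set.mem_univ (x - y) : x - y ∈ S ∪ -S) with h | h
    · exact .inl ⟨h, Λ.sub_mem hx.2 hy.2⟩
    · exact .inr ⟨neg_sub x y ▸ h, Λ.sub_mem hy.2 hx.2⟩
  antisymm x hx hx' := (hS.inter ▸ ⟨hx.1, hx'.1⟩ : x ∈ ({0} : Set (Fin k → ℝ)))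

theorem isAnalyticToeplitz_of_representsToeplitz {F : Matrix (Fin m) (Fin n) (APB k)}
    (hF : ∀ i j, APWmem k (S ∩ Λ) (F i j))
    {T : BesCol k n (S ∩ Λ) →L[ℂ] BesCol k m (S ∩ Λ)} (hT : RepresentsToeplitz k S Λ m n F T) :
    IsAnalyticToeplitz F T where
  mem := hF
  isToeplitz q r := by
    have hentry := hT q.1 q.2 r.1 r.2
    rwa [← stdBasis_eq_single, ← stdBasis_eq_single, inner_stdBasis_left] at hentry

end Statement

end ToeplitzCorona

open ToeplitzCorona in
theorem toeplitz_corona_sufficiency_general (k p m n : ℕ) (S Λ : Set (Fin k → ℝ))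
    (hΔ : IsCone (S ∩ Λ))
    (A : Matrix (Fin p) (Fin m) (APB k)) (hA : ∀ i j, APWmem k (S ∩ Λ) (A i j))
    (B : Matrix (Fin p) (Fin n) (APB k)) (hB : ∀ i j, APWmem k (S ∩ Λ) (B i j))
    (γ : ℝ) (hγ : 0 < γ)
    (TA : BesCol k m (S ∩ Λ) →L[ℂ] BesCol k p (S ∩ Λ))
    (TB : BesCol k n (S ∩ Λ) →L[ℂ] BesCol k p (S ∩ Λ))
    (hTA : RepresentsToeplitz k S Λ p m A TA) (hTB : RepresentsToeplitz k S Λ p n B TB)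
    (hpos : (TA.comp (ContinuousLinearMap.adjoint TA) -
        ((γ : ℂ) ^ 2)⁻¹ • TB.comp (ContinuousLinearMap.adjoint TB)).IsPositive)
    (hinv : CLMInvertible (TA.comp (ContinuousLinearMap.adjoint TA) -
        ((γ : ℂ) ^ 2)⁻¹ • TB.comp (ContinuousLinearMap.adjoint TB))) :
    ∃ F : Matrix (Fin m) (Fin n) (APB k),
      (∀ i j, APWmem k (S ∩ Λ) (F i j)) ∧ MatrixSupOpNormLE k m n F γ ∧ A * F = B := by
  have hγ2 : 0 < γ ^ 2 := by positivity
  have hdefect : defect TA TB (γ ^ 2)⁻¹ = TA.comp (ContinuousLinearMap.adjoint TA) -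
      ((γ : ℂ) ^ 2)⁻¹ • TB.comp (ContinuousLinearMap.adjoint TB) := by
    rw [defect, Complex.ofReal_inv, Complex.ofReal_pow]
  obtain ⟨Dinv, hleft, hright⟩ := hinv
  have h : PositiveDefect A B TA TB (γ ^ 2)⁻¹ :=
    { cone := hΔ
      analyticA := isAnalyticToeplitz_of_representsToeplitz hA hTA
      analyticB := isAnalyticToeplitz_of_representsToeplitz hB hTB
      pos := hdefect ▸ hpos
      unit := hdefect ▸ isUnit_iff_exists.2 ⟨Dinv, hright, hleft⟩ }
  obtain ⟨F, hF, hbound, hAF⟩ := h.exists_solution (inv_nonneg.2 hγ2.le)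
  refine ⟨F, hF, fun s v => Real.sqrt_le_iff.2 ⟨by positivity, ?_⟩, hAF⟩
  rw [mul_pow, Real.sq_sqrt (by positivity), ← inv_mul_le_iff₀ hγ2]
  exact hbound s v

open ToeplitzCorona in
/-- **Theorem 5.1, sufficiency part.**  Let `S ⊂ ℝ^k` be a halfspace,
`A ∈ (APW^k_S)^{p×m}`, `B ∈ (APW^k_S)^{p×p}` invertible in `(APW^k)^{p×p}`,
`γ > 0`, `A` and `B` left coprime over `APW^k_S`, and `Λ'` an additive
subgroup of `ℝ^k` containing `σ(A) ∪ σ(B)`.  If the operator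
`T(A) T(A)* − γ⁻² T(B) T(B)*` is positive definite and invertible, then there
exists `F ∈ (APW^k_{S∩Λ'})^{m×p}` with `sup_t ‖F(t)‖ ≤ γ` and `A F = B`. -/
theorem toeplitz_corona_sufficiency (k p m : ℕ)
    (S : Set (Fin k → ℝ)) (hS : IsHalfspace k S)
    (A : Matrix (Fin p) (Fin m) (APB k)) (hA : ∀ i j, APWmem k S (A i j))
    (B : Matrix (Fin p) (Fin p) (APB k)) (hB : ∀ i j, APWmem k S (B i j))
    (hBinv : ∃ Binv : Matrix (Fin p) (Fin p) (APB k),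
      (∀ i j, APWmem k Set.univ (Binv i j)) ∧ B * Binv = 1 ∧ Binv * B = 1)
    (γ : ℝ) (hγ : 0 < γ)
    (hcoprime : ∃ (Y₁ : Matrix (Fin m) (Fin p) (APB k))
        (Y₂ : Matrix (Fin p) (Fin p) (APB k)),
      (∀ i j, APWmem k S (Y₁ i j)) ∧ (∀ i j, APWmem k S (Y₂ i j)) ∧
      A * Y₁ + B * Y₂ = 1)
    (Lam : AddSubgroup (Fin k → ℝ))
    (hLamA : ∀ i j, bohrSpectrum k (⇑(A i j)) ⊆ ↑Lam)
    (hLamB : ∀ i j, bohrSpectrum k (⇑(B i j)) ⊆ ↑Lam)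
    (TA : BesCol k m (S ∩ ↑Lam) →L[ℂ] BesCol k p (S ∩ ↑Lam))
    (TB : BesCol k p (S ∩ ↑Lam) →L[ℂ] BesCol k p (S ∩ ↑Lam))
    (hTA : RepresentsToeplitz k S (↑Lam) p m A TA)
    (hTB : RepresentsToeplitz k S (↑Lam) p p B TB)
    (hpos : (TA.comp (ContinuousLinearMap.adjoint TA) -
        ((γ : ℂ) ^ 2)⁻¹ • TB.comp (ContinuousLinearMap.adjoint TB)).IsPositive)
    (hposdef : ∀ v : BesCol k p (S ∩ ↑Lam), v ≠ 0 →
      0 < (inner ℂ v ((TA.comp (ContinuousLinearMap.adjoint TA) -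
        ((γ : ℂ) ^ 2)⁻¹ • TB.comp (ContinuousLinearMap.adjoint TB)) v) : ℂ).re)
    (hinv : CLMInvertible (TA.comp (ContinuousLinearMap.adjoint TA) -
        ((γ : ℂ) ^ 2)⁻¹ • TB.comp (ContinuousLinearMap.adjoint TB))) :
    ∃ F : Matrix (Fin m) (Fin p) (APB k),
      (∀ i j, APWmem k (S ∩ ↑Lam) (F i j)) ∧
      MatrixSupOpNormLE k m p F γ ∧ A * F = B :=
  toeplitz_corona_sufficiency_general k p m p S Lam (isCone_inter hS Lam)
    A (fun i j => APWmem_inter (hA i j) (hLamA i j))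
    B (fun i j => APWmem_inter (hB i j) (hLamB i j))
    γ hγ TA TB hTA hTB hpos hinv
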